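/- arXiv:1006.4762 — 3 statements merged into one kernel-verified Lean document; each statement's English description precedes it below -/
import Mathlib

section
/- Let n ≥ 3 and let P := F_q[X_1,…,X_n,Y_1,…,Y_n,Z_{2−n},…,Z_{n−2}] be a polynomial ring in 4n−3 variables, with φ: P → F_q[x_1,…,x_n,y_1,…,y_n] the F_q-algebra homomorphism X_i ↦ f_i, Y_i ↦ f_i*, Z_j ↦ u_j (2−n ≤ j ≤ n−2). For 0 ≤ t < s ≤ n define C_{s,t} := Σ_{1 ≤ j_1 < ⋯ < j_{s−t} ≤ s} ∏_{l=1}^{s−t} X_{j_l}^{(q−1)·q^{t+l−j_l}} ∈ P and C*_{s,t} the same expression with X replaced by Y, with C_{s,s} = C*_{s,s} := 1. For 1 ≤ k ≤ n define (whenever all Z-indices occurring lie in {2−n,…,n−2}) the polynomials R_k := Σ_{i=0}^{k−1} Σ_{j=0}^{n−k} (−1)^{i+j+n+1} C_{k−1,i} C*_{n−k,j} Z_{i−j}^{q^{min(i,j)}} − X_k Y_{n+1−k}, R_k^+ := Σ_{i=0}^{k−1} Σ_{j=0}^{n−k} (−1)^{i+j+n+1} C_{k−1,i}^q C*_{n−k,j}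 Z_{i−j+1}^{q^{min(i+1,j)}} − X_k^q Y_{n+1−k}, and R_k^− := Σ_{i=0}^{k−1} Σ_{j=0}^{n−k} (−1)^{i+j+n+1} C_{k−1,i} (C*_{n−k,j})^q Z_{i−j−1}^{q^{min(i,j+1)}} − X_k Y_{n+1−k}^q. Then the kernel of φ is the ideal of P generated by the 2n−3 polynomials R_1^+, R_2, R_3^−, R_3, R_4^−, R_4, R_5^−, …, R_{n−2}, R_{n−1}^−, R_{n−1}, R_n^− (that is, R_1^+ and R_2, then R_k^− and R_k for k = 3,…,n−1, then R_n^−). -/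
open MvPolynomial

variable (F : Type) [Field F] [Fintype F] (n : ℕ)

/-- `fX F n k` is the orbit product `f_k` (1-indexed, meaningful for `1 ≤ k ≤ n`). -/
noncomputable def fX (k : ℕ) : MvPolynomial (Fin n ⊕ Fin n) F :=
  if h : 1 ≤ k ∧ k ≤ n then
    ∏ α : Fin (k - 1) → F,
      (X (Sum.inl ⟨k - 1, by omega⟩) +
        ∑ j : Fin (k - 1), C (α j) * X (Sum.inl ⟨j.val, by omega⟩))
  else 0

/-- `fY F n k` is `f_k^*` (1-indexed), the orbit product of `y_{n+1-k}`. -/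
noncomputable def fY (k : ℕ) : MvPolynomial (Fin n ⊕ Fin n) F :=
  if h : 1 ≤ k ∧ k ≤ n then
    ∏ α : Fin (k - 1) → F,
      (X (Sum.inr ⟨n - k, by omega⟩) +
        ∑ j : Fin (k - 1), C (α j) * X (Sum.inr ⟨n - 1 - j.val, by omega⟩))
  else 0

/-- `uInv F n j` is the invariant `u_j`, for `j : ℤ`. -/
noncomputable def uInv (j : ℤ) : MvPolynomial (Fin n ⊕ Fin n) F :=
  if 0 ≤ j then ∑ k : Fin n, X (Sum.inl k) ^ (Fintype.card F) ^ j.toNat * X (Sum.inr k)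
  else ∑ k : Fin n, X (Sum.inl k) * X (Sum.inr k) ^ (Fintype.card F) ^ (-j).toNat

/-- `cX F n s t` is the Dickson-type invariant `c_{s,t}` (in the `x`-variables):
the sum over strictly increasing sequences `1 ≤ j_1 < ⋯ < j_{s-t} ≤ s` (encoded as
strictly monotone functions `Fin (s-t) → Fin s`) of `∏_l f_{j_l}^{(q-1)·q^{t+l-j_l}}`. -/
noncomputable def cX (s t : ℕ) : MvPolynomial (Fin n ⊕ Fin n) F :=
  if s ≤ n then
    ∑ g ∈ Finset.univ.filter (fun g : Fin (s - t) → Fin s => ∀ a b : Fin (s - t), a < b → g a < g b),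
      ∏ l : Fin (s - t),
        fX F n ((g l).val + 1) ^ ((Fintype.card F - 1) * (Fintype.card F) ^ (t + l.val - (g l).val))
  else 0

/-- `cY F n s t` is `c_{s,t}^*` (in the `y`-variables). -/
noncomputable def cY (s t : ℕ) : MvPolynomial (Fin n ⊕ Fin n) F :=
  if s ≤ n then
    ∑ g ∈ Finset.univ.filter (fun g : Fin (s - t) → Fin s => ∀ a b : Fin (s - t), a < b → g a < g b),
      ∏ l : Fin (s - t),
        fY F n ((g l).val + 1) ^ ((Fintype.card F - 1) * (Fintype.card F) ^ (t + l.val - (g l).val))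
  else 0

/-- The variable `X_k` (1-indexed) of the presentation ring `P` for `U_n`. -/
noncomputable def Xv (k : ℕ) : MvPolynomial (Fin n ⊕ Fin n ⊕ Fin (2 * n - 3)) F :=
  if h : 1 ≤ k ∧ k ≤ n then X (Sum.inl ⟨k - 1, by omega⟩) else 0

/-- The variable `Y_k` (1-indexed). -/
noncomputable def Yv (k : ℕ) : MvPolynomial (Fin n ⊕ Fin n ⊕ Fin (2 * n - 3)) F :=
  if h : 1 ≤ k ∧ k ≤ n then X (Sum.inr (Sum.inl ⟨k - 1, by omega⟩)) else 0

/-- The variable `Z_j` for `j ∈ {2-n,…,n-2}`. -/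
noncomputable def Zv (j : ℤ) : MvPolynomial (Fin n ⊕ Fin n ⊕ Fin (2 * n - 3)) F :=
  if h : 2 - (n : ℤ) ≤ j ∧ j ≤ (n : ℤ) - 2 then
    X (Sum.inr (Sum.inr ⟨(j + n - 2).toNat, by omega⟩))
  else 0

/-- `C_{s,t}` in the presentation ring. -/
noncomputable def CXv (s t : ℕ) : MvPolynomial (Fin n ⊕ Fin n ⊕ Fin (2 * n - 3)) F :=
  ∑ g ∈ Finset.univ.filter (fun g : Fin (s - t) → Fin s => ∀ a b : Fin (s - t), a < b → g a < g b),
    ∏ l : Fin (s - t),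
      Xv F n ((g l).val + 1) ^ ((Fintype.card F - 1) * (Fintype.card F) ^ (t + l.val - (g l).val))

/-- `C_{s,t}^*` in the presentation ring. -/
noncomputable def CYv (s t : ℕ) : MvPolynomial (Fin n ⊕ Fin n ⊕ Fin (2 * n - 3)) F :=
  ∑ g ∈ Finset.univ.filter (fun g : Fin (s - t) → Fin s => ∀ a b : Fin (s - t), a < b → g a < g b),
    ∏ l : Fin (s - t),
      Yv F n ((g l).val + 1) ^ ((Fintype.card F - 1) * (Fintype.card F) ^ (t + l.val - (g l).val))

/-- The relation polynomial `R_k`. -/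
noncomputable def Rv (k : ℕ) : MvPolynomial (Fin n ⊕ Fin n ⊕ Fin (2 * n - 3)) F :=
  (∑ i ∈ Finset.range k, ∑ j ∈ Finset.range (n - k + 1),
    (-1 : MvPolynomial (Fin n ⊕ Fin n ⊕ Fin (2 * n - 3)) F) ^ (i + j + n + 1) *
      CXv F n (k - 1) i * CYv F n (n - k) j *
      Zv F n ((i : ℤ) - (j : ℤ)) ^ (Fintype.card F ^ min i j))
  - Xv F n k * Yv F n (n + 1 - k)

/-- The relation polynomial `R_k^+`. -/
noncomputable def RvPlus (k : ℕ) : MvPolynomial (Fin n ⊕ Fin n ⊕ Fin (2 * n - 3)) F :=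
  (∑ i ∈ Finset.range k, ∑ j ∈ Finset.range (n - k + 1),
    (-1 : MvPolynomial (Fin n ⊕ Fin n ⊕ Fin (2 * n - 3)) F) ^ (i + j + n + 1) *
      CXv F n (k - 1) i ^ (Fintype.card F) * CYv F n (n - k) j *
      Zv F n ((i : ℤ) - (j : ℤ) + 1) ^ (Fintype.card F ^ min (i + 1) j))
  - Xv F n k ^ (Fintype.card F) * Yv F n (n + 1 - k)

/-- The relation polynomial `R_k^-`. -/
noncomputable def RvMinus (k : ℕ) : MvPolynomial (Fin n ⊕ Fin n ⊕ Fin (2 * n - 3)) F :=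
  (∑ i ∈ Finset.range k, ∑ j ∈ Finset.range (n - k + 1),
    (-1 : MvPolynomial (Fin n ⊕ Fin n ⊕ Fin (2 * n - 3)) F) ^ (i + j + n + 1) *
      CXv F n (k - 1) i * CYv F n (n - k) j ^ (Fintype.card F) *
      Zv F n ((i : ℤ) - (j : ℤ) - 1) ^ (Fintype.card F ^ min i (j + 1)))
  - Xv F n k * Yv F n (n + 1 - k) ^ (Fintype.card F)

set_option linter.unusedSectionVars false

section PartA
variable {σ : Type} [Fintype σ] {R : Type} [CommRing R]

/-- polynomials all of whose monomials have weight `< d` -/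
noncomputable def WtLt (R : Type) [CommRing R] (w : σ → ℕ) (d : ℕ) :
    Submodule R (MvPolynomial σ R) :=
  restrictSupport R {c | Finsupp.weight w c < d}

theorem mem_WtLt {w : σ → ℕ} {d : ℕ} {p : MvPolynomial σ R} :
    p ∈ WtLt R w d ↔ ∀ c ∈ p.support, Finsupp.weight w c < d := by
  rw [WtLt, mem_restrictSupport_iff]; rfl

theorem WtLt_mono {w : σ → ℕ} {d e : ℕ} (h : d ≤ e) {p : MvPolynomial σ R}
    (hp : p ∈ WtLt R w d) : p ∈ WtLt R w e :=
  mem_WtLt.2 fun c hc => lt_of_lt_of_le (mem_WtLt.1 hp c hc) h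

theorem WtLt_zero {w : σ → ℕ} {p : MvPolynomial σ R} (hp : p ∈ WtLt R w 0) : p = 0 := by
  rw [← support_eq_empty, Finset.eq_empty_iff_forall_notMem]
  intro c hc
  exact absurd (mem_WtLt.1 hp c hc) (by simp)

theorem WtLt_mul {w : σ → ℕ} {a b : ℕ} {p r : MvPolynomial σ R}
    (hp : p ∈ WtLt R w (a + 1)) (hr : r ∈ WtLt R w b) : p * r ∈ WtLt R w (a + b) := by
  classical
  rw [mem_WtLt] at *
  intro c hc
  have := support_mul p r hc
  rw [Finset.mem_add] at this
  obtain ⟨c1, h1, c2, h2, rfl⟩ := this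
  have := hp c1 h1
  have := hr c2 h2
  rw [map_add]; omega

theorem WtLt_mul' {w : σ → ℕ} {a b : ℕ} {p r : MvPolynomial σ R}
    (hp : p ∈ WtLt R w (a + 1)) (hr : r ∈ WtLt R w (b + 1)) : p * r ∈ WtLt R w (a + b + 1) :=
  WtLt_mul (b := b + 1) hp hr

theorem WtLt_C {w : σ → ℕ} (r : R) : (C r : MvPolynomial σ R) ∈ WtLt R w 1 := by
  rw [WtLt, C_apply, monomial_mem_restrictSupport]; left; simp

theorem WtLt_X {w : σ → ℕ} (i : σ) : (X i : MvPolynomial σ R) ∈ WtLt R w (w i + 1) := by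
  rw [X, WtLt, monomial_mem_restrictSupport]; left; simp [Finsupp.weight_single]

theorem WtLt_one {w : σ → ℕ} : (1 : MvPolynomial σ R) ∈ WtLt R w 1 := WtLt_C 1

theorem WtLt_pow {w : σ → ℕ} {a : ℕ} {p : MvPolynomial σ R}
    (hp : p ∈ WtLt R w (a + 1)) (k : ℕ) : p ^ k ∈ WtLt R w (k * a + 1) := by
  induction k with
  | zero => simpa using WtLt_one
  | succ k ih =>
    rw [pow_succ]
    have := WtLt_mul' ih hp
    convert this using 2; ring

theorem WtLt_prod {ι : Type} {w : σ → ℕ} (s : Finset ι) (f : ι → MvPolynomial σ R)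
    (h : ∀ i ∈ s, f i ∈ WtLt R w 1) : ∏ i ∈ s, f i ∈ WtLt R w 1 := by
  classical
  induction s using Finset.induction_on with
  | empty => simpa using WtLt_one
  | insert a s ha ih =>
    rw [Finset.prod_insert ha]
    exact WtLt_mul' (a := 0) (b := 0) (h a (by simp)) (ih fun i hi => h i (by simp [hi]))

/-- `p` has leading monomial `c`. -/
def LeadM (w : σ → ℕ) (p : MvPolynomial σ R) (c : σ →₀ ℕ) : Prop :=
  p - monomial c 1 ∈ WtLt R w (Finsupp.weight w c)

theorem LeadM.mem {w : σ → ℕ} {p : MvPolynomial σ R} {c : σ →₀ ℕ} (h : LeadM w p c) :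
    p ∈ WtLt R w (Finsupp.weight w c + 1) := by
  have h1 : monomial c (1 : R) ∈ WtLt R w (Finsupp.weight w c + 1) := by
    rw [WtLt, monomial_mem_restrictSupport]; left; simp
  have := (WtLt R w _).add_mem (WtLt_mono (Nat.le_succ _) h) h1
  simpa using this

theorem LeadM.mul {w : σ → ℕ} {p r : MvPolynomial σ R} {c d : σ →₀ ℕ}
    (h : LeadM w p c) (h' : LeadM w r d) : LeadM w (p * r) (c + d) := by
  have h1 : monomial d (1 : R) ∈ WtLt R w (Finsupp.weight w d + 1) := by
    rw [WtLt, monomial_mem_restrictSupport]; left; simp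
  have e : p * r - monomial (c + d) 1 = p * (r - monomial d 1) + monomial d 1 * (p - monomial c 1) := by
    have : (monomial (c + d) 1 : MvPolynomial σ R) = monomial c 1 * monomial d 1 := by
      rw [monomial_mul, one_mul]
    rw [this]; ring
  rw [LeadM, e, map_add]
  refine Submodule.add_mem _ (WtLt_mul h.mem h') ?_
  rw [add_comm]
  exact WtLt_mul h1 h

theorem LeadM.one {w : σ → ℕ} : LeadM w (1 : MvPolynomial σ R) 0 := by
  have : (monomial (0 : σ →₀ ℕ) (1 : R)) = 1 := rfl
  rw [LeadM, this]; simp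

theorem LeadM.pow {w : σ → ℕ} {p : MvPolynomial σ R} {c : σ →₀ ℕ}
    (h : LeadM w p c) (k : ℕ) : LeadM w (p ^ k) (k • c) := by
  induction k with
  | zero => simpa using LeadM.one
  | succ k ih => rw [pow_succ, succ_nsmul]; exact ih.mul h

theorem LeadM.prod {ι : Type} {w : σ → ℕ} (s : Finset ι) (f : ι → MvPolynomial σ R)
    (c : ι → σ →₀ ℕ) (h : ∀ i ∈ s, LeadM w (f i) (c i)) :
    LeadM w (∏ i ∈ s, f i) (∑ i ∈ s, c i) := by
  classical
  induction s using Finset.induction_on with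
  | empty => simpa using LeadM.one
  | insert a s ha ih =>
    rw [Finset.prod_insert ha, Finset.sum_insert ha]
    exact (h a (by simp)).mul (ih fun i hi => h i (by simp [hi]))

theorem LeadM.X {w : σ → ℕ} (i : σ) : LeadM w (X i : MvPolynomial σ R) (Finsupp.single i 1) := by
  rw [LeadM, MvPolynomial.X]; simp

/-- value of `T` on monomials -/
noncomputable def Tval (e : σ → ℕ) (r : σ → MvPolynomial σ R) (c : σ →₀ ℕ) : MvPolynomial σ R :=
  ∏ i, (X i ^ (c i % e i) * r i ^ (c i / e i))

noncomputable def Tmap (e : σ → ℕ) (r : σ → MvPolynomial σ R) :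
    MvPolynomial σ R →ₗ[R] MvPolynomial σ R :=
  (basisMonomials σ R).constr R (Tval e r)

theorem Tmap_monomial (e : σ → ℕ) (r : σ → MvPolynomial σ R) (c : σ →₀ ℕ) :
    Tmap e r (monomial c 1) = Tval e r c := by
  have := (basisMonomials σ R).constr_basis R (Tval e r) c
  simpa [Tmap] using this

theorem Tval_lead {w e : σ → ℕ} {r : σ → MvPolynomial σ R}
    (hr : ∀ i, LeadM w (r i) (Finsupp.single i (e i))) (c : σ →₀ ℕ) :
    LeadM w (Tval e r c) c := by
  have : c = ∑ i, ((c i % e i) • Finsupp.single i 1 + (c i / e i) • Finsupp.single i (e i)) := by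
    ext j
    simp only [Finsupp.smul_single, Finsupp.finsetSum_apply, Finsupp.add_apply, smul_eq_mul, mul_one]
    rw [Finset.sum_eq_single j]
    · simp [Nat.mod_add_div']
    · intro b _ hb; simp [hb]
    · simp
  have h2 := LeadM.prod (w := w) Finset.univ (fun i => (X i ^ (c i % e i) * r i ^ (c i / e i)))
    (fun i => ((c i % e i) • Finsupp.single i 1 + (c i / e i) • Finsupp.single i (e i)))
    (fun i _ => ((LeadM.X i).pow _).mul ((hr i).pow _))
  rw [← this] at h2
  exact h2

theorem Tmap_sub {w e : σ → ℕ} {r : σ → MvPolynomial σ R}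
    (hr : ∀ i, LeadM w (r i) (Finsupp.single i (e i))) (d : ℕ) (p : MvPolynomial σ R)
    (hp : p ∈ WtLt R w (d + 1)) : Tmap e r p - p ∈ WtLt R w d := by
  rw [WtLt, restrictSupport_eq_span] at hp
  induction hp using Submodule.span_induction with
  | mem x h =>
    obtain ⟨c, hc, rfl⟩ := h
    simp only [Tmap_monomial]
    exact WtLt_mono (Nat.lt_succ_iff.1 hc) (Tval_lead hr c)
  | zero => simp
  | add x y _ _ hx hy =>
    rw [map_add, add_sub_add_comm]; exact Submodule.add_mem _ hx hy
  | smul a x _ hx =>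
    rw [map_smul, ← smul_sub]; exact Submodule.smul_mem _ _ hx

theorem exists_WtLt (w : σ → ℕ) (p : MvPolynomial σ R) : ∃ d, p ∈ WtLt R w d := by
  refine ⟨p.support.sup (Finsupp.weight w) + 1, mem_WtLt.2 fun c hc => ?_⟩
  exact Nat.lt_succ_iff.2 (Finset.le_sup (f := Finsupp.weight w) hc)

theorem Tmap_inj {w e : σ → ℕ} {r : σ → MvPolynomial σ R}
    (hr : ∀ i, LeadM w (r i) (Finsupp.single i (e i))) (p : MvPolynomial σ R)
    (h0 : Tmap e r p = 0) : p = 0 := by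
  obtain ⟨d, hd⟩ := exists_WtLt w p
  induction d with
  | zero => exact WtLt_zero hd
  | succ d ih =>
    apply ih
    have := Tmap_sub hr d p hd
    rw [h0, zero_sub] at this
    simpa using (WtLt R w d).neg_mem this

theorem Tmap_surj {w e : σ → ℕ} {r : σ → MvPolynomial σ R}
    (hr : ∀ i, LeadM w (r i) (Finsupp.single i (e i))) (p : MvPolynomial σ R) :
    ∃ p', Tmap e r p' = p := by
  obtain ⟨d, hd⟩ := exists_WtLt w p
  induction d generalizing p with
  | zero => exact ⟨0, by rw [WtLt_zero hd, map_zero]⟩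
  | succ d ih =>
    obtain ⟨p', h⟩ := ih _ (Tmap_sub hr d p hd)
    exact ⟨p - p', by rw [map_sub, h]; ring⟩

theorem Tmap_mul {e : σ → ℕ} (he : ∀ i, 0 < e i) {r : σ → MvPolynomial σ R} (i : σ)
    (p : MvPolynomial σ R) :
    Tmap e r (monomial (Finsupp.single i (e i)) 1 * p) = r i * Tmap e r p := by
  classical
  induction p using MvPolynomial.induction_on' with
  | monomial c a =>
    have e0 : (monomial c a : MvPolynomial σ R) = a • monomial c 1 := by
      rw [smul_monomial, smul_eq_mul, mul_one]
    rw [e0, mul_smul_comm, map_smul, map_smul, mul_smul_comm, monomial_mul, one_mul,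
      Tmap_monomial, Tmap_monomial, Tval, Tval, ← Finset.mul_prod_erase _ _ (Finset.mem_univ i),
      ← Finset.mul_prod_erase _ (fun j => X j ^ (c j % e j) * r j ^ (c j / e j)) (Finset.mem_univ i)]
    have e1 : (Finsupp.single i (e i) + c) i = c i + e i := by simp [add_comm]
    rw [e1, Nat.add_mod_right, Nat.add_div_right _ (he i), pow_succ]
    have e2 : ∏ j ∈ Finset.univ.erase i, (X j ^ ((Finsupp.single i (e i) + c) j % e j) *
        r j ^ ((Finsupp.single i (e i) + c) j / e j)) =
        ∏ j ∈ Finset.univ.erase i, (X j ^ (c j % e j) * r j ^ (c j / e j)) := by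
      refine Finset.prod_congr rfl fun j hj => ?_
      have hj' : i ≠ j := (Finset.ne_of_mem_erase hj).symm
      have : (Finsupp.single i (e i) + c) j = c j := by simp [hj']
      rw [this]
    rw [e2]
    congr 1
    ring
  | add p q hp hq => rw [mul_add, map_add, map_add, hp, hq, mul_add]

/-- multiplication by a variable not involved in the relations is injective mod the ideal -/
theorem mem_of_X_mul_mem {w e : σ → ℕ} (he : ∀ i, 0 < e i) {r : σ → MvPolynomial σ R}
    (hr : ∀ i, LeadM w (r i) (Finsupp.single i (e i))) (τ : Set σ)
    (k : σ) (hk : k ∉ τ) (hek : e k = 1) (hrk : r k = X k)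
    (p : MvPolynomial σ R) (hp : X k * p ∈ Ideal.span (r '' τ)) : p ∈ Ideal.span (r '' τ) := by
  classical
  set J : Submodule R (MvPolynomial σ R) := restrictSupport R {c | ∃ i ∈ τ, e i ≤ c i} with hJ
  have h1 : ∀ p ∈ J, Tmap e r p ∈ Ideal.span (r '' τ) := by
    intro p hp
    rw [hJ, restrictSupport_eq_span] at hp
    induction hp using Submodule.span_induction with
    | mem x h =>
      obtain ⟨c, ⟨i, hi, hc⟩, rfl⟩ := h
      simp only [Tmap_monomial, Tval]
      have hd : r i ∣ ∏ i, (X i ^ (c i % e i) * r i ^ (c i / e i)) := by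
        refine Dvd.dvd.trans ?_ (Finset.dvd_prod_of_mem _ (Finset.mem_univ i))
        refine Dvd.dvd.mul_left (dvd_pow_self _ ?_) _
        exact (Nat.div_pos hc (he i)).ne'
      exact Ideal.mem_of_dvd _ hd (Ideal.subset_span ⟨i, hi, rfl⟩)
    | zero => simp
    | add x y _ _ hx hy => rw [map_add]; exact Ideal.add_mem _ hx hy
    | smul a x _ hx => rw [map_smul, smul_eq_C_mul]; exact Ideal.mul_mem_left _ _ hx
  have h2 : ∀ p, p ∈ Ideal.span (r '' τ) → ∃ p' ∈ J, Tmap e r p' = p := by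
    intro p hp
    induction hp using Submodule.closure_induction with
    | zero => exact ⟨0, J.zero_mem, map_zero _⟩
    | add x y _ _ hx hy =>
      obtain ⟨x', hx, rfl⟩ := hx
      obtain ⟨y', hy, rfl⟩ := hy
      exact ⟨x' + y', J.add_mem hx hy, map_add _ _ _⟩
    | smul_mem a x hx =>
      obtain ⟨i, hi, rfl⟩ := hx
      obtain ⟨a', rfl⟩ := Tmap_surj hr a
      refine ⟨monomial (Finsupp.single i (e i)) 1 * a', ?_, by
        rw [Tmap_mul he, smul_eq_mul, mul_comm]⟩
      rw [hJ, mem_restrictSupport_iff]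
      intro c hc
      have := support_mul _ _ hc
      rw [Finset.mem_add] at this
      obtain ⟨c1, h1, c2, h2, rfl⟩ := this
      have := Finset.mem_of_subset support_monomial_subset h1
      rw [Finset.mem_singleton] at this
      subst this
      exact ⟨i, hi, by simp⟩
  obtain ⟨p', rfl⟩ := Tmap_surj hr p
  obtain ⟨y, hy, hy2⟩ := h2 _ hp
  have e1 : y = X k * p' := by
    have := Tmap_mul he (r := r) k p'
    rw [hrk, hek] at this
    have h3 : Tmap e r (y - X k * p') = 0 := by
      rw [map_sub, hy2, X, this, sub_eq_zero]; rfl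
    exact sub_eq_zero.1 (Tmap_inj hr _ h3)
  apply h1
  rw [e1, hJ, mem_restrictSupport_iff] at hy
  rw [hJ, mem_restrictSupport_iff]
  intro c hc
  have : c + Finsupp.single k 1 ∈ (X k * p').support := by
    rw [mem_support_iff, add_comm, coeff_X_mul]; simpa using hc
  obtain ⟨i, hi, h⟩ := hy this
  refine ⟨i, hi, ?_⟩
  have : i ≠ k := by rintro rfl; exact hk hi
  simpa [Finsupp.single_apply, this.symm] using h
end PartA
section PartB
variable {F : Type} [Field F] [Fintype F] {A : Type} [CommRing A] [Algebra F A]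

/-- generic version of `C_{s,t}` -/
def cgen (q : ℕ) (f : ℕ → A) (m s t : ℕ) : A :=
  ∑ g ∈ Finset.univ.filter (fun g : Fin m → Fin s => ∀ a b : Fin m, a < b → g a < g b),
    ∏ l : Fin m, f ((g l).val + 1) ^ ((q - 1) * q ^ (t + l.val - (g l).val))

theorem cgen_succ (q : ℕ) (f : ℕ → A) (m s t : ℕ) :
    cgen q f (m + 1) (s + 1) t =
      f (s + 1) ^ ((q - 1) * q ^ (t + m - s)) * cgen q f m s t + cgen q f (m + 1) s t := by
  classical
  unfold cgen
  rw [← Finset.sum_filter_add_sum_filter_not _ (fun g : Fin (m + 1) → Fin (s + 1) =>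
    g (Fin.last m) = Fin.last s)]
  congr 1
  · rw [Finset.mul_sum]
    symm
    refine Finset.sum_bij (fun g _ => Fin.snoc (α := fun _ => Fin (s + 1))
      (fun l => (g l).castSucc) (Fin.last s)) ?_ ?_ ?_ ?_
    · intro g hg
      simp only [Finset.mem_filter, Finset.mem_univ, true_and] at hg ⊢
      refine ⟨?_, by simp⟩
      intro a b
      refine Fin.lastCases ?_ (fun b => ?_) b
      · refine Fin.lastCases ?_ (fun a => ?_) a
        · intro h; exact absurd h (lt_irrefl _)
        · intro _; simp [Fin.castSucc_lt_last]
      · refine Fin.lastCases ?_ (fun a => ?_) a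
        · intro h; exact absurd h (not_lt.2 (Fin.le_last _))
        · intro h; simpa using hg a b (by simpa using h)
    · intro g _ g' _ h
      funext l
      have := congrFun h l.castSucc
      simpa using this
    · intro g hg
      simp only [Finset.mem_filter, Finset.mem_univ, true_and] at hg
      obtain ⟨hg, hl⟩ := hg
      have hlt : ∀ l : Fin m, (g l.castSucc).val < s := by
        intro l
        have := hg _ _ (Fin.castSucc_lt_last l)
        rw [hl] at this
        exact this
      refine ⟨fun l => ⟨(g l.castSucc).val, hlt l⟩, ?_, ?_⟩
      · simp only [Finset.mem_filter, Finset.mem_univ, true_and]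
        intro a b hab
        have := hg a.castSucc b.castSucc (by simpa using hab)
        exact this
      · funext l
        refine Fin.lastCases ?_ (fun l => ?_) l
        · simp [hl]
        · simp
    · intro g _
      rw [Fin.prod_univ_castSucc]
      simp [mul_comm]
  · symm
    refine Finset.sum_bij (fun g _ => fun l => (g l).castSucc) ?_ ?_ ?_ ?_
    · intro g hg
      simp only [Finset.mem_filter, Finset.mem_univ, true_and] at hg ⊢
      refine ⟨fun a b hab => by simpa using hg a b hab, (Fin.castSucc_lt_last _).ne⟩
    · intro g _ g' _ h
      funext l
      have := congrFun h l
      simpa using this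
    · intro g hg
      simp only [Finset.mem_filter, Finset.mem_univ, true_and] at hg
      obtain ⟨hg, hl⟩ := hg
      have hlt : ∀ l : Fin (m + 1), (g l).val < s := by
        intro l
        have h1 : (g (Fin.last m)).val < s := by
          have := (g (Fin.last m)).isLt
          have : (g (Fin.last m)).val ≠ s := fun h => hl (Fin.ext h)
          omega
        rcases (Fin.le_last l).lt_or_eq with h | h
        · exact lt_trans (hg _ _ h) h1
        · rw [h]; exact h1
      refine ⟨fun l => ⟨(g l).val, hlt l⟩, ?_, ?_⟩
      · simp only [Finset.mem_filter, Finset.mem_univ, true_and]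
        intro a b hab
        exact hg a b hab
      · funext l; rfl
    · intro g _
      simp

theorem cgen_bound {m s : ℕ} (g : Fin m → Fin s) (hg : ∀ a b : Fin m, a < b → g a < g b)
    (l : Fin m) : (g l).val + (m - l.val) ≤ s := by
  obtain ⟨l, hl⟩ := l
  induction h : m - l generalizing l with
  | zero => omega
  | succ k ih =>
    by_cases h2 : l + 1 < m
    · have h3 := ih (l + 1) h2 (by omega)
      have := hg ⟨l, hl⟩ ⟨l + 1, h2⟩ (by simp)
      have : (g ⟨l, hl⟩).val < (g ⟨l + 1, h2⟩).val := this
      omega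
    · have := (g ⟨l, hl⟩).isLt
      omega

theorem cgen_empty (q : ℕ) (f : ℕ → A) (m s t : ℕ) (h : s < m) : cgen q f m s t = 0 := by
  unfold cgen
  rw [Finset.sum_eq_zero]
  intro g hg
  simp only [Finset.mem_filter, Finset.mem_univ, true_and] at hg
  have := cgen_bound g hg ⟨0, by omega⟩
  dsimp only at this
  omega

theorem cgen_zero (q : ℕ) (f : ℕ → A) (s t : ℕ) : cgen q f 0 s t = 1 := by
  unfold cgen
  simp

theorem frob_apply (t : ℕ) (x : A) : ((FiniteField.frobeniusAlgHom F A) ^ t) x =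
    x ^ (Fintype.card F) ^ t := by
  induction t with
  | zero => simp
  | succ t ih =>
    rw [pow_succ', AlgHom.mul_apply, ih, FiniteField.coe_frobeniusAlgHom]
    simp only
    rw [← pow_mul, pow_succ]

theorem cgen_pow (f : ℕ → A) (m s t : ℕ) (h : m + t = s) :
    cgen (Fintype.card F) f m s t ^ (Fintype.card F) = cgen (Fintype.card F) f m s (t + 1) := by
  have h0 : ∀ x : A, x ^ (Fintype.card F) = FiniteField.frobeniusAlgHom F A x := fun x => rfl
  unfold cgen
  rw [h0, map_sum]
  refine Finset.sum_congr rfl fun g hg => ?_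
  rw [map_prod]
  refine Finset.prod_congr rfl fun l _ => ?_
  simp only [Finset.mem_filter, Finset.mem_univ, true_and] at hg
  have := cgen_bound g hg l
  have := l.isLt
  rw [← h0, ← pow_mul, mul_assoc, ← pow_succ]
  congr 3
  omega

/-- recursive version -/
def dd (q : ℕ) (f : ℕ → A) : ℕ → ℕ → A
  | 0, 0 => 1
  | 0, _ + 1 => 0
  | s + 1, 0 => f (s + 1) ^ (q - 1) * dd q f s 0
  | s + 1, t + 1 => dd q f s t ^ q + f (s + 1) ^ (q - 1) * dd q f s (t + 1)

theorem dd_gt {q : ℕ} (hq : q ≠ 0) (f : ℕ → A) (s t : ℕ) (h : s < t) : dd q f s t = 0 := by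
  induction s generalizing t with
  | zero => cases t with
    | zero => omega
    | succ t => rfl
  | succ s ih => cases t with
    | zero => omega
    | succ t => rw [dd, ih t (by omega), ih (t + 1) (by omega), zero_pow hq]; ring

theorem dd_self {q : ℕ} (hq : q ≠ 0) (f : ℕ → A) (s : ℕ) : dd q f s s = 1 := by
  induction s with
  | zero => rfl
  | succ s ih => rw [dd, ih, dd_gt hq f s (s + 1) (by omega)]; ring

theorem cgen_eq_dd (f : ℕ → A) (s t : ℕ) (h : t ≤ s) :
    cgen (Fintype.card F) f (s - t) s t = dd (Fintype.card F) f s t := by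
  have hq : Fintype.card F ≠ 0 := Fintype.card_ne_zero
  induction s generalizing t with
  | zero =>
    obtain rfl : t = 0 := by omega
    rw [cgen_zero]; rfl
  | succ s ih =>
    rcases h.lt_or_eq with h | rfl
    · cases t with
      | zero =>
        rw [dd, ← ih 0 (by omega), Nat.sub_zero, Nat.sub_zero, cgen_succ, cgen_empty _ _ (s + 1) s _ (by omega)]
        simp
      | succ t =>
        rw [dd, ← ih t (by omega), ← ih (t + 1) (by omega), cgen_pow _ _ _ _ (by omega)]
        obtain ⟨m, rfl⟩ : ∃ m, s = t + 1 + m := ⟨s - (t + 1), by omega⟩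
        have e1 : t + 1 + m + 1 - (t + 1) = m + 1 := by omega
        have e2 : t + 1 + m - t = m + 1 := by omega
        have e3 : t + 1 + m - (t + 1) = m := by omega
        rw [e1, e2, e3, cgen_succ]
        simp [add_comm]
    · rw [Nat.sub_self, cgen_zero, dd_self hq]

/-- linearized polynomial -/
def Lp (q : ℕ) (f : ℕ → A) (s : ℕ) (T : A) : A :=
  ∑ t ∈ Finset.range (s + 1), (-1) ^ (s + t) * dd q f s t * T ^ q ^ t

theorem neg_one_pow_q : ((-1 : A)) ^ (Fintype.card F) = -1 := by
  have h0 : (-1 : A) ^ (Fintype.card F) = FiniteField.frobeniusAlgHom F A (-1) := rfl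
  rw [h0, map_neg, map_one]

theorem Lp_succ (f : ℕ → A) (s : ℕ) (T : A) :
    Lp (Fintype.card F) f (s + 1) T = Lp (Fintype.card F) f s T ^ (Fintype.card F) -
      f (s + 1) ^ (Fintype.card F - 1) * Lp (Fintype.card F) f s T := by
  have hq : Fintype.card F ≠ 0 := Fintype.card_ne_zero
  have h0 : ∀ x : A, x ^ (Fintype.card F) = FiniteField.frobeniusAlgHom F A x := fun x => rfl
  set q := Fintype.card F with hqd
  have e1 : Lp q f s T ^ q =
      ∑ t ∈ Finset.range (s + 1), (-1) ^ (s + t) * dd q f s t ^ q * T ^ q ^ (t + 1) := by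
    rw [Lp, h0, map_sum]
    refine Finset.sum_congr rfl fun t _ => ?_
    rw [map_mul, map_mul, ← h0, ← h0, ← h0, ← pow_mul, ← pow_mul T, pow_succ q t]
    congr 2
    rw [mul_comm, pow_mul, neg_one_pow_q]
  have e2 : Lp q f s T = ∑ t ∈ Finset.range (s + 2), (-1) ^ (s + t) * dd q f s t * T ^ q ^ t := by
    rw [Finset.sum_range_succ, dd_gt hq f s (s + 1) (by omega), Lp]; ring
  rw [e1]
  rw [e2]
  rw [Lp, Finset.sum_range_succ', Finset.sum_range_succ' _ (s + 1), mul_add, ← sub_sub, Finset.mul_sum,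
    ← Finset.sum_sub_distrib]
  rw [sub_eq_add_neg _ (f (s + 1) ^ (q - 1) * _)]
  congr 1
  · refine Finset.sum_congr rfl fun t _ => ?_
    rw [dd]; ring
  · rw [dd]; ring

theorem Lp_add (f : ℕ → A) (s : ℕ) (T S : A) : Lp (Fintype.card F) f s (T + S) =
    Lp (Fintype.card F) f s T + Lp (Fintype.card F) f s S := by
  unfold Lp
  rw [← Finset.sum_add_distrib]
  refine Finset.sum_congr rfl fun t _ => ?_
  rw [← frob_apply (F := F), map_add, frob_apply, frob_apply]; ring

theorem Lp_smul (f : ℕ → A) (s : ℕ) (a : F) (S : A) : Lp (Fintype.card F) f s (algebraMap F A a * S) =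
    algebraMap F A a * Lp (Fintype.card F) f s S := by
  unfold Lp
  rw [Finset.mul_sum]
  refine Finset.sum_congr rfl fun t _ => ?_
  rw [← frob_apply (F := F), map_mul, AlgHom.commutes, frob_apply]; ring

theorem prod_field (K : Type) [Field K] [Algebra F K] (T : K) :
    ∏ a : F, (T + algebraMap F K a) = T ^ (Fintype.card F) - T := by
  have h1 : (∏ a : F, (Polynomial.X - Polynomial.C a)) =
      (Polynomial.X ^ Fintype.card F - Polynomial.X : Polynomial F) := by
    have hq := Fintype.one_lt_card (α := F)
    have h2 := FiniteField.roots_X_pow_card_sub_X F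
    have h3 := Polynomial.prod_multiset_X_sub_C_of_monic_of_roots_card_eq
      (p := (Polynomial.X ^ Fintype.card F - Polynomial.X : Polynomial F))
      (by
        apply Polynomial.monic_X_pow_sub
        rw [Polynomial.degree_X]; exact_mod_cast hq)
      (by rw [h2, FiniteField.X_pow_card_sub_X_natDegree_eq _ hq]; rfl)
    rw [h2] at h3
    exact h3
  have h2 := congrArg (Polynomial.aeval T) h1
  rw [map_prod] at h2
  simp only [map_sub, Polynomial.aeval_X, Polynomial.aeval_C, map_pow] at h2
  rw [← h2]
  refine Fintype.prod_equiv (Equiv.neg F) _ _ fun a => ?_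
  simp

theorem prod_dom [IsDomain A] (T S : A) :
    ∏ a : F, (T + algebraMap F A a * S) = T ^ (Fintype.card F) - S ^ (Fintype.card F - 1) * T := by
  have hq := Fintype.one_lt_card (α := F)
  by_cases hS : S = 0
  · subst hS
    rw [zero_pow (by omega)]
    simp
  apply FaithfulSMul.algebraMap_injective A (FractionRing A)
  have hs : algebraMap A (FractionRing A) S ≠ 0 := by simpa using hS
  rw [map_prod]
  simp only [map_add, map_mul, map_sub, map_pow, ← IsScalarTower.algebraMap_apply]
  set s := algebraMap A (FractionRing A) S
  set t := algebraMap A (FractionRing A) T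
  have h := prod_field (F := F) (FractionRing A) (t / s)
  have : ∀ a : F, t + algebraMap F (FractionRing A) a * s =
      s * (t / s + algebraMap F (FractionRing A) a) := by intro a; field_simp
  simp only [this]
  rw [Finset.prod_mul_distrib, h, Finset.prod_const, Finset.card_univ]
  obtain ⟨k, hk⟩ : ∃ k, Fintype.card F = k + 1 := ⟨Fintype.card F - 1, by omega⟩
  rw [hk, div_pow, Nat.add_sub_cancel]
  field_simp
  ring

theorem prod_eq_Lp [IsDomain A] (f x : ℕ → A) (N : ℕ)
    (hf : ∀ j < N, f (j + 1) = ∏ α : Fin j → F, (x j + ∑ i : Fin j, algebraMap F A (α i) * x i))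
    (s : ℕ) (hs : s ≤ N) (T : A) :
    ∏ α : Fin s → F, (T + ∑ i : Fin s, algebraMap F A (α i) * x i) = Lp (Fintype.card F) f s T := by
  induction s generalizing T with
  | zero => simp [Lp, dd]
  | succ s ih =>
    rw [Lp_succ, ← prod_dom (F := F), hf s (by omega), ← (Fin.snocEquiv (fun _ : Fin (s + 1) => F)).prod_comp,
      Fintype.prod_prod_type]
    refine Finset.prod_congr rfl fun a _ => ?_
    rw [ih (by omega), ← Lp_smul, ← Lp_add, ← ih (by omega)]
    refine Finset.prod_congr rfl fun α _ => ?_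
    rw [Fin.sum_univ_castSucc]
    simp [Fin.snocEquiv]
    ring

theorem Lp_self [IsDomain A] (f x : ℕ → A) (N : ℕ)
    (hf : ∀ j < N, f (j + 1) = ∏ α : Fin j → F, (x j + ∑ i : Fin j, algebraMap F A (α i) * x i))
    (s : ℕ) (hs : s < N) : Lp (Fintype.card F) f s (x s) = f (s + 1) := by
  rw [hf s hs, prod_eq_Lp f x N hf s hs.le]

theorem Lp_lt [IsDomain A] (f x : ℕ → A) (N : ℕ)
    (hf : ∀ j < N, f (j + 1) = ∏ α : Fin j → F, (x j + ∑ i : Fin j, algebraMap F A (α i) * x i))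
    (s : ℕ) (hs : s ≤ N) (i : ℕ) (hi : i < s) : Lp (Fintype.card F) f s (x i) = 0 := by
  rw [← prod_eq_Lp f x N hf s hs]
  refine Finset.prod_eq_zero (Finset.mem_univ (Pi.single ⟨i, hi⟩ (-1))) ?_
  rw [Finset.sum_eq_single ⟨i, hi⟩]
  · simp
  · intro b _ hb; simp [hb]
  · simp
end PartB
section PartC

noncomputable def xs (j : ℕ) : MvPolynomial (Fin n ⊕ Fin n) F :=
  if h : j < n then X (Sum.inl ⟨j, h⟩) else 0

noncomputable def ys (j : ℕ) : MvPolynomial (Fin n ⊕ Fin n) F :=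
  if h : j < n then X (Sum.inr ⟨n - 1 - j, by omega⟩) else 0

theorem hfX (j : ℕ) (hj : j < n) : fX F n (j + 1) = ∏ α : Fin j → F, (xs F n j +
    ∑ i : Fin j, algebraMap F (MvPolynomial (Fin n ⊕ Fin n) F) (α i) * xs F n i) := by
  rw [fX, dif_pos ⟨by omega, by omega⟩]
  refine Finset.prod_congr rfl fun α _ => ?_
  congr 1
  · rw [xs, dif_pos hj]; rfl
  · refine Finset.sum_congr rfl fun i _ => ?_
    rw [xs, dif_pos (lt_trans i.isLt hj)]; rfl

theorem hfY (j : ℕ) (hj : j < n) : fY F n (j + 1) = ∏ α : Fin j → F, (ys F n j +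
    ∑ i : Fin j, algebraMap F (MvPolynomial (Fin n ⊕ Fin n) F) (α i) * ys F n i) := by
  rw [fY, dif_pos ⟨by omega, by omega⟩]
  refine Finset.prod_congr rfl fun α _ => ?_
  congr 1
  · rw [ys, dif_pos hj]
    congr 3
    omega
  · refine Finset.sum_congr rfl fun i _ => ?_
    rw [ys, dif_pos (lt_trans i.isLt hj)]; rfl

/-- the presentation map -/
noncomputable def phi : MvPolynomial (Fin n ⊕ Fin n ⊕ Fin (2 * n - 3)) F →ₐ[F]
    MvPolynomial (Fin n ⊕ Fin n) F :=
  aeval (R := F) (Sum.elim (fun i : Fin n => fX F n (i.val + 1))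
        (Sum.elim (fun i : Fin n => fY F n (i.val + 1))
          (fun m : Fin (2 * n - 3) => uInv F n ((m : ℤ) + 2 - n))))

theorem phi_Xv (k : ℕ) : phi F n (Xv F n k) = fX F n k := by
  by_cases h : 1 ≤ k ∧ k ≤ n
  · rw [Xv, dif_pos h, phi, aeval_X]
    simp only [Sum.elim_inl]
    congr 1; omega
  · rw [Xv, dif_neg h, fX, dif_neg h, map_zero]

theorem phi_Yv (k : ℕ) : phi F n (Yv F n k) = fY F n k := by
  by_cases h : 1 ≤ k ∧ k ≤ n
  · rw [Yv, dif_pos h, phi, aeval_X]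
    simp only [Sum.elim_inl, Sum.elim_inr]
    congr 1; omega
  · rw [Yv, dif_neg h, fY, dif_neg h, map_zero]

theorem phi_Zv (j : ℤ) (h : 2 - (n : ℤ) ≤ j ∧ j ≤ (n : ℤ) - 2) :
    phi F n (Zv F n j) = uInv F n j := by
  rw [Zv, dif_pos h, phi, aeval_X]
  simp only [Sum.elim_inr]
  congr 1; omega

theorem map_cgen {A B : Type} [CommRing A] [CommRing B] (g : A →+* B) (q : ℕ) (f : ℕ → A)
    (m s t : ℕ) : g (cgen q f m s t) = cgen q (fun i => g (f i)) m s t := by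
  simp only [cgen, map_sum, map_prod, map_pow]

theorem CXv_eq (s t : ℕ) (h : t ≤ s) : CXv F n s t = dd (Fintype.card F) (Xv F n) s t :=
  cgen_eq_dd (F := F) (Xv F n) s t h

theorem CYv_eq (s t : ℕ) (h : t ≤ s) : CYv F n s t = dd (Fintype.card F) (Yv F n) s t :=
  cgen_eq_dd (F := F) (Yv F n) s t h

theorem map_dd {A B : Type} [CommRing A] [CommRing B] (g : A →+* B) (q : ℕ) (f : ℕ → A)
    (s t : ℕ) : g (dd q f s t) = dd q (fun i => g (f i)) s t := by
  induction s generalizing t with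
  | zero => cases t <;> simp [dd]
  | succ s ih => cases t <;> simp [dd, ih]

theorem phi_dX (s t : ℕ) : phi F n (dd (Fintype.card F) (Xv F n) s t) =
    dd (Fintype.card F) (fX F n) s t := by
  have := map_dd (phi F n).toRingHom (Fintype.card F) (Xv F n) s t
  simp only [AlgHom.toRingHom_eq_coe, RingHom.coe_coe, phi_Xv] at this
  exact this

theorem phi_dY (s t : ℕ) : phi F n (dd (Fintype.card F) (Yv F n) s t) =
    dd (Fintype.card F) (fY F n) s t := by
  have := map_dd (phi F n).toRingHom (Fintype.card F) (Yv F n) s t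
  simp only [AlgHom.toRingHom_eq_coe, RingHom.coe_coe, phi_Yv] at this
  exact this

noncomputable def ZZ (i j : ℕ) : MvPolynomial (Fin n ⊕ Fin n ⊕ Fin (2 * n - 3)) F :=
  Zv F n ((i : ℤ) - (j : ℤ)) ^ (Fintype.card F ^ min i j)

theorem phi_ZZ (i j : ℕ) (h : 2 - (n : ℤ) ≤ (i : ℤ) - j ∧ (i : ℤ) - j ≤ (n : ℤ) - 2) :
    phi F n (ZZ F n i j) = ∑ m : Fin n, X (Sum.inl m) ^ (Fintype.card F) ^ i *
      X (Sum.inr m) ^ (Fintype.card F) ^ j := by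
  rw [ZZ, map_pow, phi_Zv F n _ h, uInv]
  split_ifs with h0
  · rw [← frob_apply (F := F), map_sum]
    refine Finset.sum_congr rfl fun m _ => ?_
    rw [map_mul, frob_apply, frob_apply, ← pow_mul, ← pow_add]
    congr 3 <;> omega
  · rw [← frob_apply (F := F), map_sum]
    refine Finset.sum_congr rfl fun m _ => ?_
    rw [map_mul, frob_apply, frob_apply, ← pow_mul, ← pow_add]
    congr 3 <;> omega

/-- uniform version of the relations -/
noncomputable def Rg (a b k : ℕ) : MvPolynomial (Fin n ⊕ Fin n ⊕ Fin (2 * n - 3)) F :=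
  (∑ i ∈ Finset.range k, ∑ j ∈ Finset.range (n - k + 1),
    (-1 : MvPolynomial (Fin n ⊕ Fin n ⊕ Fin (2 * n - 3)) F) ^ (i + j + n + 1) *
      dd (Fintype.card F) (Xv F n) (k - 1) i ^ Fintype.card F ^ a *
      dd (Fintype.card F) (Yv F n) (n - k) j ^ Fintype.card F ^ b * ZZ F n (i + a) (j + b))
  - Xv F n k ^ Fintype.card F ^ a * Yv F n (n + 1 - k) ^ Fintype.card F ^ b

theorem Rv_eq (k : ℕ) : Rv F n k = Rg F n 0 0 k := by
  rw [Rv, Rg]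
  refine congrArg₂ (· - ·) ?_ ?_
  · refine Finset.sum_congr rfl fun i hi => Finset.sum_congr rfl fun j hj => ?_
    rw [Finset.mem_range] at hi hj
    rw [CXv_eq F n _ _ (by omega), CYv_eq F n _ _ (by omega), ZZ]; simp
  · simp

theorem RvPlus_eq (k : ℕ) : RvPlus F n k = Rg F n 1 0 k := by
  rw [RvPlus, Rg]
  refine congrArg₂ (· - ·) ?_ ?_
  · refine Finset.sum_congr rfl fun i hi => Finset.sum_congr rfl fun j hj => ?_
    rw [Finset.mem_range] at hi hj
    rw [CXv_eq F n _ _ (by omega), CYv_eq F n _ _ (by omega), ZZ,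
      show (i : ℤ) - (j : ℤ) + 1 = ((i + 1 : ℕ) : ℤ) - ((j + 0 : ℕ) : ℤ) by push_cast; ring]; simp
  · simp

theorem RvMinus_eq (k : ℕ) : RvMinus F n k = Rg F n 0 1 k := by
  rw [RvMinus, Rg]
  refine congrArg₂ (· - ·) ?_ ?_
  · refine Finset.sum_congr rfl fun i hi => Finset.sum_congr rfl fun j hj => ?_
    rw [Finset.mem_range] at hi hj
    rw [CXv_eq F n _ _ (by omega), CYv_eq F n _ _ (by omega), ZZ,
      show (i : ℤ) - (j : ℤ) - 1 = ((i + 0 : ℕ) : ℤ) - ((j + 1 : ℕ) : ℤ) by push_cast; ring]; simp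
  · simp

theorem Lp_pow {A : Type} [CommRing A] [Algebra F A] (f : ℕ → A) (s a : ℕ) (T : A) :
    Lp (Fintype.card F) f s T ^ Fintype.card F ^ a = ∑ t ∈ Finset.range (s + 1),
      (-1) ^ (s + t) * dd (Fintype.card F) f s t ^ Fintype.card F ^ a *
        T ^ Fintype.card F ^ (t + a) := by
  rw [Lp, ← frob_apply (F := F), map_sum]
  refine Finset.sum_congr rfl fun t _ => ?_
  rw [map_mul, map_mul, frob_apply _ (dd _ _ _ _), frob_apply _ (T ^ _), ← pow_mul T, ← pow_add,
    map_pow, map_neg, map_one]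

theorem phi_Rg (a b k : ℕ) (hk : 1 ≤ k) (hk' : k ≤ n)
    (h1 : 2 + b ≤ a + k) (h2 : k + a + 1 ≤ n + b) : phi F n (Rg F n a b k) = 0 := by
  have e : phi F n (∑ i ∈ Finset.range k, ∑ j ∈ Finset.range (n - k + 1),
    (-1 : MvPolynomial (Fin n ⊕ Fin n ⊕ Fin (2 * n - 3)) F) ^ (i + j + n + 1) *
      dd (Fintype.card F) (Xv F n) (k - 1) i ^ Fintype.card F ^ a *
      dd (Fintype.card F) (Yv F n) (n - k) j ^ Fintype.card F ^ b * ZZ F n (i + a) (j + b)) =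
      ∑ m : Fin n, Lp (Fintype.card F) (fX F n) (k - 1) (X (Sum.inl m)) ^ Fintype.card F ^ a *
        Lp (Fintype.card F) (fY F n) (n - k) (X (Sum.inr m)) ^ Fintype.card F ^ b := by
    have e0 : ∀ u v : MvPolynomial (Fin n ⊕ Fin n) F,
        Lp (Fintype.card F) (fX F n) (k - 1) u ^ Fintype.card F ^ a *
        Lp (Fintype.card F) (fY F n) (n - k) v ^ Fintype.card F ^ b = _ := fun u v => by
      rw [Lp_pow, Lp_pow, Finset.sum_mul_sum]
    simp only [e0]
    rw [map_sum (phi F n), Finset.sum_comm, show k - 1 + 1 = k by omega]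
    refine Finset.sum_congr rfl fun i hi => ?_
    rw [map_sum (phi F n), Finset.sum_comm]
    refine Finset.sum_congr rfl fun j hj => ?_
    rw [Finset.mem_range] at hi hj
    simp only [map_mul, map_pow, map_neg, map_one, phi_dX, phi_dY]
    rw [phi_ZZ F n _ _ (by omega), Finset.mul_sum]
    refine Finset.sum_congr rfl fun m _ => ?_
    have : (-1 : MvPolynomial (Fin n ⊕ Fin n) F) ^ (i + j + n + 1) =
        (-1) ^ (k - 1 + i) * (-1) ^ (n - k + j) := by
      rw [← pow_add, show i + j + n + 1 = (k - 1 + i + (n - k + j)) + 2 by omega, pow_add]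
      simp
    rw [this]; ring
  rw [Rg, map_sub, e, sub_eq_zero, map_mul, map_pow, map_pow, phi_Xv, phi_Yv]
  have hx : ∀ m : Fin n, X (Sum.inl m) = xs F n m.val := fun m => by rw [xs, dif_pos m.isLt]
  have hy : ∀ m : Fin n, X (Sum.inr m) = ys F n (n - 1 - m.val) := fun m => by
    have := m.isLt
    rw [ys, dif_pos (by omega)]; congr 2; apply Fin.ext; simp only; omega
  have hq : ∀ c, Fintype.card F ^ c ≠ 0 := fun c => pow_ne_zero _ Fintype.card_ne_zero
  rw [Finset.sum_eq_single ⟨k - 1, by omega⟩]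
  · rw [hx, hy]
    dsimp only
    rw [show n - 1 - (k - 1) = n - k by omega,
      Lp_self _ _ n (hfX F n) _ (by omega), Lp_self _ _ n (hfY F n) _ (by omega),
      show k - 1 + 1 = k by omega, show n - k + 1 = n + 1 - k by omega]
  · intro m _ hm
    have hm' : m.val ≠ k - 1 := fun h => hm (Fin.ext h)
    rcases lt_or_gt_of_ne hm' with h | h
    · rw [hx, Lp_lt _ _ n (hfX F n) _ (by omega) _ h, zero_pow (hq _), zero_mul]
    · rw [hy, Lp_lt _ _ n (hfY F n) _ (by omega) _ (by omega), zero_pow (hq _), mul_zero]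
  · intro h; exact absurd (Finset.mem_univ _) h

end PartC
section PartD

/-- weights -/
def wt (q : ℕ) : Fin n ⊕ Fin n ⊕ Fin (2 * n - 3) → ℕ :=
  Sum.elim (fun _ => 0) (Sum.elim (fun _ => 0)
    (fun m => q ^ ((m.val : ℤ) + 2 - n).natAbs + 1))

theorem Xv_wt (q k : ℕ) : Xv F n k ∈ WtLt F (wt n q) 1 := by
  rw [Xv]; split_ifs
  · exact WtLt_X _
  · exact Submodule.zero_mem _

theorem Yv_wt (q k : ℕ) : Yv F n k ∈ WtLt F (wt n q) 1 := by
  rw [Yv]; split_ifs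
  · exact WtLt_X _
  · exact Submodule.zero_mem _

theorem pow_wt {σ R : Type} [Fintype σ] [CommRing R] {w : σ → ℕ} {p : MvPolynomial σ R}
    (h : p ∈ WtLt R w 1) (k : ℕ) : p ^ k ∈ WtLt R w 1 := by
  simpa using WtLt_pow (a := 0) h k

theorem dd_wt {σ R : Type} [Fintype σ] [CommRing R] {w : σ → ℕ} (q : ℕ)
    (f : ℕ → MvPolynomial σ R) (hf : ∀ i, f i ∈ WtLt R w 1) (s t : ℕ) :
    dd q f s t ∈ WtLt R w 1 := by
  induction s generalizing t with
  | zero => cases t with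
    | zero => exact WtLt_one
    | succ t => exact Submodule.zero_mem _
  | succ s ih => cases t with
    | zero => exact WtLt_mul' (a := 0) (b := 0) (pow_wt (hf _) _) (ih _)
    | succ t =>
      have h1 := pow_wt (ih t) q
      have h2 := WtLt_mul' (a := 0) (b := 0) (pow_wt (hf (s + 1)) (q - 1)) (ih (t + 1))
      exact Submodule.add_mem _ h1 h2

theorem Zv_wt (q : ℕ) (j : ℤ) : Zv F n j ∈ WtLt F (wt n q) (q ^ j.natAbs + 1 + 1) := by
  rw [Zv]; split_ifs with h
  · have := WtLt_X (R := F) (w := wt n q) (Sum.inr (Sum.inr ⟨(j + n - 2).toNat, by omega⟩))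
    convert this using 3
    simp only [wt, Sum.elim_inr]
    congr 2
    omega
  · exact Submodule.zero_mem _

theorem pow_arith (q i j : ℕ) :
    q ^ min i j * (q ^ ((i : ℤ) - (j : ℤ)).natAbs + 1) = q ^ i + q ^ j := by
  rcases le_total i j with h | h
  · rw [min_eq_left h, mul_add, ← pow_add, mul_one,
      show i + ((i : ℤ) - (j : ℤ)).natAbs = j by omega, add_comm]
  · rw [min_eq_right h, mul_add, ← pow_add, mul_one,
      show j + ((i : ℤ) - (j : ℤ)).natAbs = i by omega]

theorem ZZ_wt (i j : ℕ) : ZZ F n i j ∈ WtLt F (wt n (Fintype.card F))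
    (Fintype.card F ^ i + Fintype.card F ^ j + 1) := by
  have := WtLt_pow (Zv_wt F n (Fintype.card F) ((i : ℤ) - (j : ℤ))) (Fintype.card F ^ min i j)
  rw [pow_arith] at this
  exact this

theorem Rg_sub (a b k : ℕ) (hk : 1 ≤ k) (hk' : k ≤ n) :
    Rg F n a b k - ZZ F n (k - 1 + a) (n - k + b) ∈ WtLt F (wt n (Fintype.card F))
      (Fintype.card F ^ (k - 1 + a) + Fintype.card F ^ (n - k + b)) := by
  classical
  have hq : 1 < Fintype.card F := Fintype.one_lt_card
  have hpos : ∀ c, 0 < Fintype.card F ^ c := fun c => pow_pos (by omega) _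
  rw [Rg, ← Finset.sum_product', ← Finset.add_sum_erase _ _
    (show (k - 1, n - k) ∈ Finset.range k ×ˢ Finset.range (n - k + 1) by
      simp only [Finset.mem_product, Finset.mem_range]; omega)]
  dsimp only
  rw [dd_self (by omega), dd_self (by omega), one_pow, one_pow, mul_one, mul_one,
    show k - 1 + (n - k) + n + 1 = 2 * n by omega, pow_mul, neg_one_sq, one_pow, one_mul]
  rw [add_sub_assoc, add_sub_cancel_left]
  refine Submodule.sub_mem _ (Submodule.sum_mem _ ?_) ?_
  · rintro ⟨i, j⟩ hij
    simp only [Finset.mem_erase, Finset.mem_product, Finset.mem_range, Prod.mk.injEq, ne_eq] at hij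
    dsimp only
    have h1 : (-1 : MvPolynomial (Fin n ⊕ Fin n ⊕ Fin (2 * n - 3)) F) ^ (i + j + n + 1) *
      dd (Fintype.card F) (Xv F n) (k - 1) i ^ Fintype.card F ^ a *
      dd (Fintype.card F) (Yv F n) (n - k) j ^ Fintype.card F ^ b ∈
        WtLt F (wt n (Fintype.card F)) 1 :=
      WtLt_mul' (a := 0) (b := 0) (WtLt_mul' (a := 0) (b := 0)
        (pow_wt (Submodule.neg_mem _ WtLt_one) _)
        (pow_wt (dd_wt _ _ (Xv_wt F n _) _ _) _)) (pow_wt (dd_wt _ _ (Yv_wt F n _) _ _) _)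
    have h2 := WtLt_mul' (a := 0) h1 (ZZ_wt F n (i + a) (j + b))
    refine WtLt_mono ?_ h2
    have h3 : Fintype.card F ^ (i + a) ≤ Fintype.card F ^ (k - 1 + a) :=
      Nat.pow_le_pow_right (by omega) (by omega)
    have h4 : Fintype.card F ^ (j + b) ≤ Fintype.card F ^ (n - k + b) :=
      Nat.pow_le_pow_right (by omega) (by omega)
    by_cases hi : i = k - 1
    · have : Fintype.card F ^ (j + b) < Fintype.card F ^ (n - k + b) :=
        Nat.pow_lt_pow_right hq (by omega)
      omega
    · have : Fintype.card F ^ (i + a) < Fintype.card F ^ (k - 1 + a) :=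
        Nat.pow_lt_pow_right hq (by omega)
      omega
  · refine WtLt_mono (d := 1) ?_ (WtLt_mul' (a := 0) (b := 0) (pow_wt (Xv_wt F n _ _) _)
      (pow_wt (Yv_wt F n _ _) _))
    have := hpos (k - 1 + a)
    omega

theorem Rg_lead (a b k : ℕ) (hk : 1 ≤ k) (hk' : k ≤ n) (m : Fin (2 * n - 3))
    (hm : (m.val : ℤ) + 2 - n = ((k - 1 + a : ℕ) : ℤ) - ((n - k + b : ℕ) : ℤ)) :
    LeadM (wt n (Fintype.card F)) (Rg F n a b k)
      (Finsupp.single (Sum.inr (Sum.inr m)) (Fintype.card F ^ min (k - 1 + a) (n - k + b))) := by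
  have h1 := Rg_sub F n a b k hk hk'
  have h2 : ZZ F n (k - 1 + a) (n - k + b) = monomial (Finsupp.single (Sum.inr (Sum.inr m))
      (Fintype.card F ^ min (k - 1 + a) (n - k + b))) 1 := by
    rw [ZZ, ← hm, Zv, dif_pos (by omega), ← X_pow_eq_monomial]
    congr 4
    apply Fin.ext
    simp only
    omega
  rw [h2] at h1
  rw [LeadM]
  convert h1 using 2
  rw [Finsupp.weight_single]
  simp only [wt, Sum.elim_inr, hm, smul_eq_mul]
  rw [pow_arith]

/-- index data `(a, b, k)` of the relation attached to `Z_m` -/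
def idx (m : ℕ) : ℕ × ℕ × ℕ :=
  if m = 0 then (1, 0, 1) else if m % 2 = 1 then (0, 0, (m + 3) / 2) else (0, 1, (m + 4) / 2)

noncomputable def rr : Fin n ⊕ Fin n ⊕ Fin (2 * n - 3) →
    MvPolynomial (Fin n ⊕ Fin n ⊕ Fin (2 * n - 3)) F :=
  Sum.elim (fun i => X (Sum.inl i)) (Sum.elim (fun i => X (Sum.inr (Sum.inl i)))
    (fun m => Rg F n (idx m).1 (idx m).2.1 (idx m).2.2))

def ee (q : ℕ) : Fin n ⊕ Fin n ⊕ Fin (2 * n - 3) → ℕ :=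
  Sum.elim (fun _ => 1) (Sum.elim (fun _ => 1)
    (fun m => q ^ min ((idx m).2.2 - 1 + (idx m).1) (n - (idx m).2.2 + (idx m).2.1)))

theorem rr_lead (i) : LeadM (wt n (Fintype.card F)) (rr F n i)
    (Finsupp.single i (ee n (Fintype.card F) i)) := by
  rcases i with i | i | m
  · exact LeadM.X _
  · exact LeadM.X _
  · have hm := m.isLt
    simp only [rr, ee, Sum.elim_inr]
    apply Rg_lead
    · unfold idx; split_ifs <;> simp only <;> omega
    · unfold idx; split_ifs <;> simp only <;> omega
    · unfold idx; split_ifs <;> simp only <;> omega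

/-- the ideal of relations -/
noncomputable def II : Ideal (MvPolynomial (Fin n ⊕ Fin n ⊕ Fin (2 * n - 3)) F) :=
  Ideal.span ({RvPlus F n 1} ∪
          {p | ∃ k, (2 ≤ k ∧ k ≤ n - 1) ∧ p = Rv F n k} ∪
          {p | ∃ k, (3 ≤ k ∧ k ≤ n) ∧ p = RvMinus F n k})

theorem II_eq (hn : 3 ≤ n) : II F n =
    Ideal.span (rr F n '' (Set.range (fun m => Sum.inr (Sum.inr m)))) := by
  rw [II]
  congr 1
  ext p
  constructor
  · rintro ((h | ⟨k, hk, h⟩) | ⟨k, hk, h⟩)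
    · refine ⟨_, ⟨⟨0, by omega⟩, rfl⟩, ?_⟩
      rw [Set.mem_singleton_iff] at h
      rw [h, RvPlus_eq]; rfl
    · refine ⟨_, ⟨⟨2 * k - 3, by omega⟩, rfl⟩, ?_⟩
      have : idx (2 * k - 3) = (0, 0, k) := by
        rw [idx, if_neg (by omega), if_pos (by omega)]
        simp only [Prod.mk.injEq, true_and]; omega
      simp only [rr, Sum.elim_inr, this]
      rw [h, Rv_eq]
    · refine ⟨_, ⟨⟨2 * k - 4, by omega⟩, rfl⟩, ?_⟩
      have : idx (2 * k - 4) = (0, 1, k) := by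
        rw [idx, if_neg (by omega), if_neg (by omega)]
        simp only [Prod.mk.injEq, true_and]; omega
      simp only [rr, Sum.elim_inr, this]
      rw [h, RvMinus_eq]
  · rintro ⟨_, ⟨m, rfl⟩, rfl⟩
    have hm := m.isLt
    simp only [rr, Sum.elim_inr, idx]
    split_ifs with h1 h2
    · left; left; rw [Set.mem_singleton_iff, RvPlus_eq]
    · left; right; exact ⟨_, by dsimp only; omega, (Rv_eq F n _).symm⟩
    · right; exact ⟨_, by dsimp only; omega, (RvMinus_eq F n _).symm⟩

theorem II_cancel (hn : 3 ≤ n) (i : Fin n) (p) (h : X (Sum.inl i) * p ∈ II F n) : p ∈ II F n := by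
  rw [II_eq F n hn] at *
  refine mem_of_X_mul_mem (w := wt n (Fintype.card F)) (e := ee n (Fintype.card F)) ?_
    (rr_lead F n) _ (Sum.inl i) ?_ rfl rfl p h
  · rintro (i | i | m)
    · exact one_pos
    · exact one_pos
    · exact pow_pos Fintype.card_pos _
  · rintro ⟨m, hm⟩; cases hm

theorem II_le (hn : 3 ≤ n) (p) (h : p ∈ II F n) : phi F n p = 0 := by
  have : II F n ≤ RingHom.ker (phi F n) := by
    rw [II, Ideal.span_le]
    rintro p ((h | ⟨k, hk, h⟩) | ⟨k, hk, h⟩)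
    · rw [Set.mem_singleton_iff] at h
      rw [h, RvPlus_eq]; exact phi_Rg F n _ _ _ (by omega) (by omega) (by omega) (by omega)
    · rw [h, Rv_eq]; exact phi_Rg F n _ _ _ (by omega) (by omega) (by omega) (by omega)
    · rw [h, RvMinus_eq]; exact phi_Rg F n _ _ _ (by omega) (by omega) (by omega) (by omega)
  exact this h

end PartD

section PartE

theorem xs_alg (K : Subalgebra F (MvPolynomial (Fin n ⊕ Fin n) F))
    (hK : ∀ k, fX F n k ∈ K) (i : ℕ) (hi : i < n) : IsAlgebraic K (xs F n i) := by
  classical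
  have hq : 1 < Fintype.card F := Fintype.one_lt_card
  let f0 : ℕ → K := fun k => ⟨fX F n k, hK k⟩
  have hd : ∀ s t, ((dd (Fintype.card F) f0 s t : K) : MvPolynomial (Fin n ⊕ Fin n) F) =
      dd (Fintype.card F) (fX F n) s t := fun s t => map_dd (algebraMap K (MvPolynomial (Fin n ⊕ Fin n) F)) _ f0 s t
  refine ⟨(∑ t ∈ Finset.range (i + 1), Polynomial.C ((-1) ^ (i + t) * dd (Fintype.card F) f0 i t) *
    Polynomial.X ^ (Fintype.card F) ^ t) - Polynomial.C (f0 (i + 1)), ?_, ?_⟩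
  · intro h
    have h1 := congrArg (fun p => Polynomial.coeff p (Fintype.card F ^ i)) h
    simp only [Polynomial.coeff_sub, Polynomial.finsetSum_coeff, Polynomial.coeff_C_mul,
      Polynomial.coeff_X_pow, Polynomial.coeff_zero] at h1
    rw [Finset.sum_eq_single i, if_pos rfl, dd_self (by omega), Polynomial.coeff_C,
      if_neg (pow_ne_zero _ (by omega)), ← two_mul, pow_mul] at h1
    · simp at h1
    · intro b _ hb
      rw [if_neg, mul_zero]
      exact fun hh => hb (Nat.pow_right_injective hq hh).symm
    · intro hh; simp at hh
  · have := Lp_self (fX F n) (xs F n) n (hfX F n) i hi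
    rw [Lp] at this
    simp only [map_sub, map_sum, map_mul, map_pow, Polynomial.aeval_C, Polynomial.aeval_X]
    rw [sub_eq_zero]
    refine Eq.trans ?_ this
    refine Finset.sum_congr rfl fun t _ => ?_
    congr 2
    exact hd i t

theorem fX_ne (s : ℕ) (hs : s < n) : fX F n (s + 1) ≠ 0 := by
  classical
  intro h
  have h1 := congrArg (eval (Pi.single (Sum.inl ⟨s, hs⟩) (1 : F))) h
  rw [hfX F n s hs, map_zero, map_prod, Finset.prod_eq_one] at h1
  · exact one_ne_zero h1
  · intro α _
    rw [map_add, map_sum, xs, dif_pos hs, eval_X, Pi.single_eq_same, Finset.sum_eq_zero, add_zero]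
    intro j _
    rw [xs, dif_pos (by omega), map_mul, eval_X, Pi.single_eq_of_ne, mul_zero]
    intro hh
    have := j.isLt
    simp only [Sum.inl.injEq, Fin.mk.injEq] at hh
    omega

theorem dd_mem {A : Type} [CommRing A] [Algebra F A] (K : Subalgebra F A) (q : ℕ) (f : ℕ → A)
    (hf : ∀ k, f k ∈ K) (s t : ℕ) : dd q f s t ∈ K := by
  induction s generalizing t with
  | zero => cases t with
    | zero => exact K.one_mem
    | succ t => exact K.zero_mem
  | succ s ih => cases t with
    | zero => exact K.mul_mem (K.pow_mem (hf _) _) (ih _)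
    | succ t =>
      exact K.add_mem (K.pow_mem (ih _) _) (K.mul_mem (K.pow_mem (hf _) _) (ih _))

theorem uInv_nat (j : ℕ) : uInv F n (j : ℤ) =
    ∑ m : Fin n, X (Sum.inl m) ^ (Fintype.card F) ^ j * X (Sum.inr m) := by
  rw [uInv, if_pos (by omega)]
  simp

theorem sum_u (s : ℕ) : ∑ j ∈ Finset.range (s + 1),
    (-1) ^ (s + j) * dd (Fintype.card F) (fX F n) s j * uInv F n (j : ℤ) =
    ∑ m : Fin n, Lp (Fintype.card F) (fX F n) s (X (Sum.inl m)) * X (Sum.inr m) := by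
  simp only [uInv_nat, Lp, Finset.mul_sum, Finset.sum_mul]
  rw [Finset.sum_comm]
  refine Finset.sum_congr rfl fun m _ => Finset.sum_congr rfl fun j _ => ?_
  ring

theorem Y_alg (K : Subalgebra F (MvPolynomial (Fin n ⊕ Fin n) F))
    (hK : ∀ k, fX F n k ∈ K) (hY : fY F n 1 ∈ K) (hU : ∀ j : ℕ, j + 2 ≤ n → uInv F n j ∈ K)
    (r : ℕ) : ∀ i : Fin n, n ≤ i.val + r + 1 →
      IsAlgebraic K (X (Sum.inr i) : MvPolynomial (Fin n ⊕ Fin n) F) := by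
  classical
  have hX : ∀ i : Fin n, IsAlgebraic K (X (Sum.inl i) : MvPolynomial (Fin n ⊕ Fin n) F) := by
    intro i
    have := xs_alg F n K hK i i.isLt
    rwa [xs, dif_pos i.isLt] at this
  have hmem : ∀ x ∈ K, IsAlgebraic K x := fun x hx =>
    isAlgebraic_algebraMap (R := K) (A := MvPolynomial (Fin n ⊕ Fin n) F) ⟨x, hx⟩
  induction r with
  | zero =>
    intro i hi
    have hi' := i.isLt
    refine hmem _ ?_
    have := Lp_self (fY F n) (ys F n) n (hfY F n) 0 (by omega)
    rw [Lp, ys, dif_pos (by omega)] at this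
    simp [dd] at this
    rw [← this] at hY
    convert hY using 3
    apply Fin.ext
    simp; omega
  | succ r ih =>
    intro i hi
    have hi' := i.isLt
    by_cases hc : n ≤ i.val + r + 1
    · exact ih i hc
    let KK := Subalgebra.algebraicClosure K (MvPolynomial (Fin n ⊕ Fin n) F)
    have hle : ∀ x ∈ K, x ∈ KK := hmem
    have hs := sum_u F n i.val
    rw [← Finset.add_sum_erase _ _ (Finset.mem_univ i)] at hs
    have e1 : Lp (Fintype.card F) (fX F n) i.val (X (Sum.inl i)) = fX F n (i.val + 1) := by
      have := Lp_self (fX F n) (xs F n) n (hfX F n) i i.isLt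
      rwa [xs, dif_pos i.isLt] at this
    rw [e1] at hs
    refine IsAlgebraic.of_mul (mem_nonZeroDivisors_of_ne_zero (fX_ne F n i.val hi'))
      (hmem _ (hK _)) ?_
    rw [← sub_eq_iff_eq_add] at hs
    rw [← hs]
    change _ ∈ KK
    refine KK.sub_mem (KK.sum_mem fun j hj => ?_) (KK.sum_mem fun m hm => ?_)
    · simp only [Finset.mem_range] at hj
      refine KK.mul_mem (KK.mul_mem ?_ (hle _ (dd_mem F K _ _ hK _ _))) (hle _ (hU _ (by omega)))
      exact KK.pow_mem (KK.neg_mem KK.one_mem) _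
    · have hm' : m ≠ i := Finset.ne_of_mem_erase hm
      have hm2 : m.val ≠ i.val := fun h => hm' (Fin.ext h)
      rcases lt_or_gt_of_ne hm2 with h | h
      · have := Lp_lt (fX F n) (xs F n) n (hfX F n) i (by omega) m h
        rw [xs, dif_pos m.isLt] at this
        rw [this, zero_mul]; exact KK.zero_mem
      · refine KK.mul_mem ?_ (ih m (by omega))
        refine KK.sum_mem fun t _ => ?_
        refine KK.mul_mem (KK.mul_mem ?_ (hle _ (dd_mem F K _ _ hK _ _))) (KK.pow_mem (hX m) _)
        exact KK.pow_mem (KK.neg_mem KK.one_mem) _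

/-- the independent variables -/
def emb (hn : 3 ≤ n) : Fin n ⊕ Fin 1 ⊕ Fin (n - 1) → Fin n ⊕ Fin n ⊕ Fin (2 * n - 3) :=
  Sum.elim (fun i => Sum.inl i) (Sum.elim (fun _ => Sum.inr (Sum.inl ⟨0, by omega⟩))
    (fun m => Sum.inr (Sum.inr ⟨m.val + (n - 2), by omega⟩)))

theorem Xv_emb (hn : 3 ≤ n) (k : ℕ) : Xv F n k = 0 ∨ ∃ i, Xv F n k = X (emb n hn (Sum.inl i)) := by
  rw [Xv]; split_ifs with h
  · exact Or.inr ⟨_, rfl⟩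
  · exact Or.inl rfl

theorem Yv_emb (hn : 3 ≤ n) : Yv F n 1 = X (emb n hn (Sum.inr (Sum.inl 0))) := by
  rw [Yv, dif_pos (by omega)]; rfl

theorem Zv_emb (hn : 3 ≤ n) (j : ℤ) (hj : 0 ≤ j) :
    Zv F n j = 0 ∨ ∃ i, Zv F n j = X (emb n hn (Sum.inr (Sum.inr i))) := by
  rw [Zv]; split_ifs with h
  · refine Or.inr ⟨⟨j.toNat, by omega⟩, ?_⟩
    simp only [emb, Sum.elim_inr]
    congr 4
    omega
  · exact Or.inl rfl

theorem alg_indep (hn : 3 ≤ n) :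
    AlgebraicIndependent F (fun i => phi F n (X (emb n hn i))) := by
  set v := fun i => phi F n (X (emb n hn i)) with hv
  set K := Algebra.adjoin F (Set.range v) with hKd
  have hK : ∀ k, fX F n k ∈ K := by
    intro k
    rw [← phi_Xv]
    rcases Xv_emb F n hn k with h | ⟨i, h⟩
    · rw [h, map_zero]; exact K.zero_mem
    · rw [h]; exact Algebra.subset_adjoin ⟨_, rfl⟩
  have hY : fY F n 1 ∈ K := by
    rw [← phi_Yv, Yv_emb F n hn]; exact Algebra.subset_adjoin ⟨_, rfl⟩
  have hU : ∀ j : ℕ, j + 2 ≤ n → uInv F n j ∈ K := by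
    intro j hj
    rw [← phi_Zv F n _ (by omega)]
    rcases Zv_emb F n hn j (by omega) with h | ⟨i, h⟩
    · rw [h, map_zero]; exact K.zero_mem
    · rw [h]; exact Algebra.subset_adjoin ⟨_, rfl⟩
  have halg : Algebra.IsAlgebraic K (MvPolynomial (Fin n ⊕ Fin n) F) := by
    rw [(IsTranscendenceBasis.mvPolynomial (Fin n ⊕ Fin n) F).isAlgebraic_iff]
    rintro (i | i)
    · have := xs_alg F n K hK i i.isLt
      rwa [xs, dif_pos i.isLt] at this
    · exact Y_alg F n K hK hY hU n i (by omega)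
  have := Algebra.IsAlgebraic.isTranscendenceBasis_of_le_trdeg_of_finite F v (by
    rw [MvPolynomial.trdeg_of_isDomain]
    simp only [Cardinal.mk_fintype, Fintype.card_sum, Fintype.card_fin, Cardinal.lift_natCast]
    exact_mod_cast (by omega : n + (1 + (n - 1)) ≤ n + n))
  exact this.1

end PartE

section PartF

/-- elements that become polynomials in the independent variables after multiplying by `X`s -/
def Good (hn : 3 ≤ n) (p : MvPolynomial (Fin n ⊕ Fin n ⊕ Fin (2 * n - 3)) F) : Prop :=
  ∃ d ∈ Submonoid.closure (Set.range (fun i : Fin n =>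
      (X (Sum.inl i) : MvPolynomial (Fin n ⊕ Fin n ⊕ Fin (2 * n - 3)) F))),
    ∃ p' ∈ (rename (R := F) (emb n hn)).range, d * p - p' ∈ II F n

theorem clos_le (hn : 3 ≤ n) (d) (hd : d ∈ Submonoid.closure (Set.range (fun i : Fin n =>
      (X (Sum.inl i) : MvPolynomial (Fin n ⊕ Fin n ⊕ Fin (2 * n - 3)) F)))) :
    d ∈ (rename (R := F) (emb n hn)).range := by
  have : Submonoid.closure (Set.range (fun i : Fin n =>
      (X (Sum.inl i) : MvPolynomial (Fin n ⊕ Fin n ⊕ Fin (2 * n - 3)) F))) ≤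
      (rename (R := F) (emb n hn)).range.toSubmonoid := by
    rw [Submonoid.closure_le]
    rintro _ ⟨i, rfl⟩
    exact ⟨X (Sum.inl i), by simp [emb]⟩
  exact this hd

theorem Good.of_mem {hn : 3 ≤ n} {p} (h : p ∈ (rename (R := F) (emb n hn)).range) :
    Good F n hn p := ⟨1, Submonoid.one_mem _, p, h, by simp⟩

theorem Good.add {hn : 3 ≤ n} {p r} (h : Good F n hn p) (h' : Good F n hn r) :
    Good F n hn (p + r) := by
  obtain ⟨d, hd, p', hp, hI⟩ := h
  obtain ⟨e, he, r', hr, hJ⟩ := h'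
  refine ⟨d * e, Submonoid.mul_mem _ hd he, e * p' + d * r',
    Subalgebra.add_mem _ (Subalgebra.mul_mem _ (clos_le F n hn e he) hp)
      (Subalgebra.mul_mem _ (clos_le F n hn d hd) hr), ?_⟩
  have : d * e * (p + r) - (e * p' + d * r') = e * (d * p - p') + d * (e * r - r') := by ring
  rw [this]
  exact Ideal.add_mem _ (Ideal.mul_mem_left _ _ hI) (Ideal.mul_mem_left _ _ hJ)

theorem Good.mul {hn : 3 ≤ n} {p r} (h : Good F n hn p) (h' : Good F n hn r) :
    Good F n hn (p * r) := by
  obtain ⟨d, hd, p', hp, hI⟩ := h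
  obtain ⟨e, he, r', hr, hJ⟩ := h'
  refine ⟨d * e, Submonoid.mul_mem _ hd he, p' * r', Subalgebra.mul_mem _ hp hr, ?_⟩
  have : d * e * (p * r) - p' * r' = (e * r) * (d * p - p') + p' * (e * r - r') := by ring
  rw [this]
  exact Ideal.add_mem _ (Ideal.mul_mem_left _ _ hI) (Ideal.mul_mem_left _ _ hJ)

/-- good elements as a subalgebra -/
def GA (hn : 3 ≤ n) : Subalgebra F (MvPolynomial (Fin n ⊕ Fin n ⊕ Fin (2 * n - 3)) F) where
  carrier := {p | Good F n hn p}
  mul_mem' := Good.mul F n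
  add_mem' := Good.add F n
  algebraMap_mem' r := Good.of_mem F n (Subalgebra.algebraMap_mem _ r)

theorem GA_II (hn : 3 ≤ n) (p r) (h : p - r ∈ II F n) (hr : r ∈ GA F n hn) : p ∈ GA F n hn := by
  obtain ⟨d, hd, r', hr', hI⟩ := hr
  refine ⟨d, hd, r', hr', ?_⟩
  have : d * p - r' = d * (p - r) + (d * r - r') := by ring
  rw [this]
  exact Ideal.add_mem _ (Ideal.mul_mem_left _ _ h) hI

theorem GA_X (hn : 3 ≤ n) (k : ℕ) (hk : 1 ≤ k ∧ k ≤ n) (p) (h : Xv F n k * p ∈ GA F n hn) :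
    p ∈ GA F n hn := by
  obtain ⟨d, hd, r', hr', hI⟩ := h
  refine ⟨d * Xv F n k, Submonoid.mul_mem _ hd (Submonoid.subset_closure ?_), r', hr', ?_⟩
  · rw [Xv, dif_pos hk]; exact ⟨_, rfl⟩
  · rwa [mul_assoc]

theorem GA_X_pow (hn : 3 ≤ n) (k : ℕ) (hk : 1 ≤ k ∧ k ≤ n) (a : ℕ) (p)
    (h : Xv F n k ^ a * p ∈ GA F n hn) : p ∈ GA F n hn := by
  induction a with
  | zero => simpa using h
  | succ a ih =>
    refine ih (GA_X F n hn k hk _ ?_)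
    rwa [pow_succ', mul_assoc] at h

theorem GA_dd (hn : 3 ≤ n) (s : ℕ) (hs : s ≤ n) (q : ℕ) (p)
    (h : dd q (Xv F n) s 0 * p ∈ GA F n hn) : p ∈ GA F n hn := by
  induction s with
  | zero => simpa [dd] using h
  | succ s ih =>
    refine ih (by omega) (GA_X_pow F n hn (s + 1) (by omega) (q - 1) _ ?_)
    rwa [dd, mul_assoc] at h

theorem GA_Xv (hn : 3 ≤ n) (k : ℕ) : Xv F n k ∈ GA F n hn := by
  rcases Xv_emb F n hn k with h | ⟨i, h⟩
  · rw [h]; exact Subalgebra.zero_mem _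
  · rw [h]; exact Good.of_mem F n ⟨X (Sum.inl i), by simp⟩

theorem GA_Y1 (hn : 3 ≤ n) : Yv F n 1 ∈ GA F n hn := by
  rw [Yv_emb F n hn]; exact Good.of_mem F n ⟨X (Sum.inr (Sum.inl 0)), by simp⟩

theorem GA_Z0 (hn : 3 ≤ n) (j : ℤ) (hj : 0 ≤ j) : Zv F n j ∈ GA F n hn := by
  rcases Zv_emb F n hn j hj with h | ⟨i, h⟩
  · rw [h]; exact Subalgebra.zero_mem _
  · rw [h]; exact Good.of_mem F n ⟨X (Sum.inr (Sum.inr i)), by simp⟩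

theorem dd_mem' {A : Type} [CommRing A] [Algebra F A] (K : Subalgebra F A) (q : ℕ) (f : ℕ → A)
    (s t : ℕ) (hf : ∀ k, k ≤ s → f k ∈ K) : dd q f s t ∈ K := by
  induction s generalizing t with
  | zero => cases t with
    | zero => exact K.one_mem
    | succ t => exact K.zero_mem
  | succ s ih =>
    have ih' := fun t => ih t fun k hk => hf k (by omega)
    cases t with
    | zero => exact K.mul_mem (K.pow_mem (hf _ le_rfl) _) (ih' _)
    | succ t =>
      exact K.add_mem (K.pow_mem (ih' _) _) (K.mul_mem (K.pow_mem (hf _ le_rfl) _) (ih' _))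

theorem GA_neg_one (hn : 3 ≤ n) (a : ℕ) :
    (-1 : MvPolynomial (Fin n ⊕ Fin n ⊕ Fin (2 * n - 3)) F) ^ a ∈ GA F n hn :=
  Subalgebra.pow_mem _ (Subalgebra.neg_mem _ (Subalgebra.one_mem _)) _

/-- summands of `Rg` are good -/
theorem GA_term (hn : 3 ≤ n) (a b k i j e : ℕ) (hY : ∀ m, m ≤ n - k → Yv F n m ∈ GA F n hn)
    (hZ : Zv F n (((i + a : ℕ) : ℤ) - ((j + b : ℕ) : ℤ)) ∈ GA F n hn) :
    (-1 : MvPolynomial (Fin n ⊕ Fin n ⊕ Fin (2 * n - 3)) F) ^ e *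
      dd (Fintype.card F) (Xv F n) (k - 1) i ^ Fintype.card F ^ a *
      dd (Fintype.card F) (Yv F n) (n - k) j ^ Fintype.card F ^ b * ZZ F n (i + a) (j + b)
      ∈ GA F n hn := by
  refine Subalgebra.mul_mem _ (Subalgebra.mul_mem _ (Subalgebra.mul_mem _ (GA_neg_one F n hn _)
    (Subalgebra.pow_mem _ ?_ _)) (Subalgebra.pow_mem _ ?_ _)) (Subalgebra.pow_mem _ hZ _)
  · exact dd_mem F _ _ _ (GA_Xv F n hn) _ _
  · exact dd_mem' F _ _ _ _ _ hY

/-- get the `Y` variable from a relation -/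
theorem GA_stepY (hn : 3 ≤ n) (a k : ℕ) (hk : 1 ≤ k ∧ k ≤ n) (hR : Rg F n a 0 k ∈ II F n)
    (hY : ∀ m, m ≤ n - k → Yv F n m ∈ GA F n hn)
    (hZ : ∀ j : ℤ, (k : ℤ) + a - n ≤ j → Zv F n j ∈ GA F n hn) :
    Yv F n (n + 1 - k) ∈ GA F n hn := by
  refine GA_X_pow F n hn k hk (Fintype.card F ^ a) _ ?_
  rw [Rg] at hR
  simp only [pow_zero, pow_one] at hR
  have hR' := (II F n).neg_mem hR
  rw [neg_sub] at hR'
  refine GA_II F n hn _ _ hR' ?_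
  refine Subalgebra.sum_mem _ fun i hi => Subalgebra.sum_mem _ fun j hj => ?_
  simp only [Finset.mem_range] at hi hj
  have := GA_term F n hn a 0 k i j (i + j + n + 1) hY (hZ _ (by omega))
  simpa only [pow_zero, pow_one] using this

/-- get the `Z` variable from a relation -/
theorem GA_stepZ (hn : 3 ≤ n) (k : ℕ) (hk : 3 ≤ k ∧ k ≤ n) (hR : Rg F n 0 1 k ∈ II F n)
    (hY : ∀ m, m ≤ n + 1 - k → Yv F n m ∈ GA F n hn)
    (hZ : ∀ j : ℤ, (k : ℤ) - n ≤ j → Zv F n j ∈ GA F n hn) :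
    Zv F n ((k : ℤ) - n - 1) ∈ GA F n hn := by
  classical
  refine GA_dd F n hn (k - 1) (by omega) (Fintype.card F) _ ?_
  have hq : Fintype.card F ≠ 0 := Fintype.card_ne_zero
  rw [Rg, ← Finset.sum_product', ← Finset.add_sum_erase _ _
    (show (0, n - k) ∈ Finset.range k ×ˢ Finset.range (n - k + 1) by
      simp only [Finset.mem_product, Finset.mem_range]; omega)] at hR
  dsimp only at hR
  rw [dd_self hq, one_pow, mul_one, ZZ, add_sub_assoc, ← sub_neg_eq_add] at hR
  have e1 : min (0 + 0) (n - k + 1) = 0 := by simp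
  have e2 : (((0 + 0 : ℕ) : ℤ) - ((n - k + 1 : ℕ) : ℤ)) = (k : ℤ) - n - 1 := by omega
  rw [e1, e2, pow_zero, pow_one, pow_one, mul_assoc] at hR
  have h1 := GA_II F n hn _ _ hR ?_
  · have h2 := Subalgebra.mul_mem _ (GA_neg_one F n hn (0 + (n - k) + n + 1)) h1
    rwa [← mul_assoc, ← mul_pow, neg_one_mul, neg_neg, one_pow, one_mul] at h2
  · refine Subalgebra.neg_mem _ (Subalgebra.sub_mem _ (Subalgebra.sum_mem _ ?_) ?_)
    · rintro ⟨i, j⟩ hij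
      simp only [Finset.mem_erase, Finset.mem_product, Finset.mem_range, Prod.mk.injEq,
        ne_eq] at hij
      have := GA_term F n hn 0 1 k i j (i + j + n + 1) (fun m hm => hY m (by omega))
        (hZ _ (by omega))
      simpa only [pow_zero, pow_one] using this
    · exact Subalgebra.mul_mem _ (Subalgebra.pow_mem _ (GA_Xv F n hn _) _)
        (Subalgebra.pow_mem _ (hY _ le_rfl) _)

theorem GA_main (hn : 3 ≤ n) (r : ℕ) : ∀ k, 2 ≤ k → k + r = n →
    (∀ m, m ≤ n + 1 - k → Yv F n m ∈ GA F n hn) ∧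
    (∀ j : ℤ, (k : ℤ) - n ≤ j → Zv F n j ∈ GA F n hn) := by
  induction r with
  | zero =>
    intro k hk hkn
    refine ⟨fun m hm => ?_, fun j hj => GA_Z0 F n hn j (by omega)⟩
    rcases (by omega : m = 0 ∨ m = 1) with rfl | rfl
    · rw [Yv, dif_neg (by omega)]; exact Subalgebra.zero_mem _
    · exact GA_Y1 F n hn
  | succ r ih =>
    intro k hk hkn
    obtain ⟨hY, hZ⟩ := ih (k + 1) (by omega) (by omega)
    have hZn := GA_stepZ F n hn (k + 1) (by omega)
      (by rw [← RvMinus_eq]; exact Ideal.subset_span (Or.inr ⟨_, by omega, rfl⟩)) hY hZ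
    have hZ' : ∀ j : ℤ, (k : ℤ) - n ≤ j → Zv F n j ∈ GA F n hn := by
      intro j hj
      by_cases h : j = (k : ℤ) - n
      · have e : ((k + 1 : ℕ) : ℤ) - n - 1 = j := by omega
        rwa [e] at hZn
      · exact hZ j (by omega)
    refine ⟨fun m hm => ?_, hZ'⟩
    by_cases h : m = n + 1 - k
    · rw [h]
      exact GA_stepY F n hn 0 k (by omega)
        (by rw [← Rv_eq]; exact Ideal.subset_span (Or.inl (Or.inr ⟨_, by omega, rfl⟩)))
        (fun m hm => hY m (by omega)) (fun j hj => hZ' j (by omega))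
    · exact hY m (by omega)

theorem GA_top (hn : 3 ≤ n) (p) : p ∈ GA F n hn := by
  obtain ⟨hY, hZ⟩ := GA_main F n hn (n - 2) 2 le_rfl (by omega)
  have hYn := GA_stepY F n hn 1 1 (by omega)
        (by rw [← RvPlus_eq]; exact Ideal.subset_span (Or.inl (Or.inl rfl)))
        (fun m hm => hY m (by omega)) (fun j hj => hZ j (by omega))
  have hX : ∀ i, X i ∈ GA F n hn := by
    rintro (i | i | m)
    · have h := GA_Xv F n hn (i.val + 1)
      rw [Xv, dif_pos (by omega)] at h
      exact h
    · have h : Yv F n (i.val + 1) ∈ GA F n hn := by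
        by_cases h : i.val + 1 = n
        · rw [h]; simpa using hYn
        · exact hY _ (by omega)
      rw [Yv, dif_pos (by omega)] at h
      exact h
    · have h := hZ ((m.val : ℤ) + 2 - n) (by push_cast; omega)
      rw [Zv, dif_pos (by omega)] at h
      convert h using 4
      apply Fin.ext
      dsimp only
      omega
  induction p using MvPolynomial.induction_on with
  | C a => exact Subalgebra.algebraMap_mem _ a
  | add p r hp hr => exact Subalgebra.add_mem _ hp hr
  | mul_X p i hp => exact Subalgebra.mul_mem _ hp (hX i)

theorem ker_le (hn : 3 ≤ n) (p) (hp : phi F n p = 0) : p ∈ II F n := by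
  obtain ⟨d, hd, p', ⟨p'', hp''⟩, hI⟩ := GA_top F n hn p
  have h1 := II_le F n hn _ hI
  rw [map_sub, map_mul, hp, mul_zero, zero_sub, neg_eq_zero, ← hp''] at h1
  have h2 : aeval (fun i => phi F n (X (emb n hn i))) p'' = 0 := by
    rw [← h1]
    change _ = ((phi F n).comp (rename (emb n hn))) p''
    congr 1
    ext i
    simp
  have h3 : p'' = 0 := (alg_indep F n hn) (by rw [h2, map_zero])
  rw [h3, map_zero] at hp''
  rw [← hp'', sub_zero] at hI
  clear h1 h2 h3 hp'' hp
  induction hd using Submonoid.closure_induction generalizing p with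
  | mem x hx => obtain ⟨i, rfl⟩ := hx; exact II_cancel F n hn i p hI
  | one => simpa using hI
  | mul x y _ _ hx hy => rw [mul_assoc] at hI; exact hy _ (hx _ hI)

end PartF

/-- Theorem (main, part (a), relations): for `n ≥ 3`, the kernel of the presentation map
`φ : P → F_q[V ⊕ V*]`, `X_i ↦ f_i`, `Y_i ↦ f_i^*`, `Z_j ↦ u_j`, is generated by the `2n-3`
relations `R_1^+, R_2, R_3^-, R_3, R_4^-, R_4, …, R_{n-1}^-, R_{n-1}, R_n^-`. -/
theorem ker_presentation_Un (hn : 3 ≤ n) :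
    RingHom.ker (aeval (R := F) (Sum.elim (fun i : Fin n => fX F n (i.val + 1))
        (Sum.elim (fun i : Fin n => fY F n (i.val + 1))
          (fun m : Fin (2 * n - 3) => uInv F n ((m : ℤ) + 2 - n)))) :
        MvPolynomial (Fin n ⊕ Fin n ⊕ Fin (2 * n - 3)) F →+* MvPolynomial (Fin n ⊕ Fin n) F)
      = Ideal.span ({RvPlus F n 1} ∪
          {p | ∃ k, (2 ≤ k ∧ k ≤ n - 1) ∧ p = Rv F n k} ∪
          {p | ∃ k, (3 ≤ k ∧ k ≤ n) ∧ p = RvMinus F n k}) := by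
  ext p
  exact ⟨fun h => ker_le F n hn p h, fun h => II_le F n hn p h⟩
end

section
/- Let n = 2 and let P := F_q[X_1,X_2,Y_1,Y_2,Z] be a polynomial ring in 5 variables, with φ: P → F_q[x_1,x_2,y_1,y_2] the F_q-algebra homomorphism X_1 ↦ f_1, X_2 ↦ f_2, Y_1 ↦ f_1*, Y_2 ↦ f_2*, Z ↦ u_0. Then: (a) the invariant ring F_q[x_1,x_2,y_1,y_2]^{U_2} equals the image of φ, and (b) the kernel of φ is the principal ideal generated by Z^q − (X_1 Y_1)^{q−1} Z − X_1^q Y_2 − Y_1^q X_2. -/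
open MvPolynomial Matrix

variable (F : Type) [Field F] [Fintype F]

/-- The action of `σ ∈ GL_2(F)` on `F[V ⊕ V*] = F[x_1,x_2,y_1,y_2]`:
`σ` acts naturally on the span of the `x_j` (so `σ·x_j = ∑_i σ_{ij} x_i`)
and by `σ·λ = λ ∘ σ⁻¹` on the span of the `y_j` (so `σ·y_j = ∑_i (σ⁻¹)_{ji} y_i`). -/
noncomputable def gact2 (σ : GL (Fin 2) F) :
    MvPolynomial (Fin 2 ⊕ Fin 2) F →ₐ[F] MvPolynomial (Fin 2 ⊕ Fin 2) F :=
  aeval (Sum.elim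
    (fun j => ∑ i : Fin 2, C ((σ : Matrix (Fin 2) (Fin 2) F) i j) * X (Sum.inl i))
    (fun j => ∑ i : Fin 2,
      C (((σ⁻¹ : GL (Fin 2) F) : Matrix (Fin 2) (Fin 2) F) j i) * X (Sum.inr i)))

/-- The presentation map `φ : F_q[X_1,X_2,Y_1,Y_2,Z] → F_q[x_1,x_2,y_1,y_2]` with
`X_1 ↦ f_1 = x_1`, `X_2 ↦ f_2 = x_2^q - x_2 x_1^{q-1}`, `Y_1 ↦ f_1^* = y_2`,
`Y_2 ↦ f_2^* = y_1^q - y_1 y_2^{q-1}`, `Z ↦ u_0 = x_1 y_1 + x_2 y_2`.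
The five variables of `Fin 5` are, in order, `X_1, X_2, Y_1, Y_2, Z`. -/
noncomputable def phi2 : MvPolynomial (Fin 5) F →ₐ[F] MvPolynomial (Fin 2 ⊕ Fin 2) F :=
  aeval
    ![X (Sum.inl 0),
      X (Sum.inl 1) ^ (Fintype.card F) - X (Sum.inl 1) * X (Sum.inl 0) ^ (Fintype.card F - 1),
      X (Sum.inr 1),
      X (Sum.inr 0) ^ (Fintype.card F) - X (Sum.inr 0) * X (Sum.inr 1) ^ (Fintype.card F - 1),
      X (Sum.inl 0) * X (Sum.inr 0) + X (Sum.inl 1) * X (Sum.inr 1)]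

section Helpers

set_option linter.unusedSectionVars false

local notation "qq" => Fintype.card F
local notation "SS" => MvPolynomial (Fin 2 ⊕ Fin 2) F
local notation "QQ" => MvPolynomial (Fin 4) F
local notation "TT" => Polynomial (Polynomial F)

lemma two_le_qq : 2 ≤ qq := Fintype.one_lt_card

lemma frob_add {R : Type*} [CommRing R] [Algebra F R] (x y : R) :
    (x + y) ^ qq = x ^ qq + y ^ qq := by
  simpa using map_add (FiniteField.frobeniusAlgHom F R) x y

lemma frob_sub {R : Type*} [CommRing R] [Algebra F R] (x y : R) :
    (x - y) ^ qq = x ^ qq - y ^ qq := by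
  simpa using map_sub (FiniteField.frobeniusAlgHom F R) x y

/-- presentation map on the first four variables -/
noncomputable def phi4 : QQ →ₐ[F] SS :=
  aeval
    ![X (Sum.inl 0),
      X (Sum.inl 1) ^ qq - X (Sum.inl 1) * X (Sum.inl 0) ^ (qq - 1),
      X (Sum.inr 1),
      X (Sum.inr 0) ^ qq - X (Sum.inr 0) * X (Sum.inr 1) ^ (qq - 1)]

/-- the invariant pairing -/
noncomputable def u0 : SS := X (Sum.inl 0) * X (Sum.inr 0) + X (Sum.inl 1) * X (Sum.inr 1)

/-- presentation map with last variable singled out -/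
noncomputable def psi : Polynomial QQ →+* SS :=
  Polynomial.eval₂RingHom (phi4 F : QQ →+* SS) (u0 F)

/-- single out the last variable -/
noncomputable def theta : MvPolynomial (Fin 5) F →ₐ[F] Polynomial QQ :=
  aeval ![Polynomial.C (X 0), Polynomial.C (X 1), Polynomial.C (X 2), Polynomial.C (X 3),
    Polynomial.X]

/-- inverse of theta -/
noncomputable def thetaInv : Polynomial QQ →+* MvPolynomial (Fin 5) F :=
  Polynomial.eval₂RingHom
    (aeval ![X 0, X 1, X 2, X 3] : QQ →ₐ[F] MvPolynomial (Fin 5) F).toRingHom (X 4)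

lemma psi_theta (p : MvPolynomial (Fin 5) F) : psi F (theta F p) = phi2 F p := by
  have : (psi F).comp (theta F : MvPolynomial (Fin 5) F →+* Polynomial QQ) =
      (phi2 F : MvPolynomial (Fin 5) F →+* SS) := by
    apply MvPolynomial.ringHom_ext
    · intro r
      simp [psi, theta, phi2, Polynomial.algebraMap_apply, MvPolynomial.algebraMap_eq]
    · intro i
      fin_cases i <;> simp [psi, theta, phi2, phi4, u0]
  exact congrArg (fun f => f p) this

lemma thetaInv_theta (p : MvPolynomial (Fin 5) F) : thetaInv F (theta F p) = p := by
  have : (thetaInv F).comp (theta F : MvPolynomial (Fin 5) F →+* Polynomial QQ) =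
      RingHom.id _ := by
    apply MvPolynomial.ringHom_ext
    · intro r
      simp [thetaInv, theta, Polynomial.algebraMap_apply, MvPolynomial.algebraMap_eq]
    · intro i
      fin_cases i <;> simp [thetaInv, theta]
  exact congrArg (fun f => f p) this

lemma phi2_thetaInv (p : Polynomial QQ) : phi2 F (thetaInv F p) = psi F p := by
  have : (phi2 F : MvPolynomial (Fin 5) F →+* SS).comp (thetaInv F) = psi F := by
    apply Polynomial.ringHom_ext'
    · apply MvPolynomial.ringHom_ext
      · intro r
        simp [psi, thetaInv, MvPolynomial.algebraMap_eq]
      · intro i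
        fin_cases i <;> simp [psi, thetaInv, phi2, phi4]
    · simp [psi, thetaInv, phi2, u0]
  exact congrArg (fun f => f p) this

/-- the relation -/
noncomputable def rel : Polynomial QQ :=
  Polynomial.X ^ qq - (Polynomial.C ((X 0 * X 2) ^ (qq - 1)) * Polynomial.X +
    Polynomial.C (X 0 ^ qq * X 3 + X 2 ^ qq * X 1))

lemma monic_aux {R : Type*} [CommRing R] [Nontrivial R] (a b : R) :
    (Polynomial.X ^ qq - (Polynomial.C a * Polynomial.X + Polynomial.C b)).Monic ∧
    (Polynomial.X ^ qq - (Polynomial.C a * Polynomial.X + Polynomial.C b)).natDegree = qq := by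
  have h2 := two_le_qq F
  have hd : (Polynomial.C a * Polynomial.X + Polynomial.C b).degree < (qq : WithBot ℕ) :=
    lt_of_le_of_lt Polynomial.degree_linear_le (by exact_mod_cast h2)
  refine ⟨Polynomial.monic_X_pow_sub hd, ?_⟩
  apply Polynomial.natDegree_eq_of_degree_eq_some
  rw [Polynomial.degree_sub_eq_left_of_degree_lt] <;> rw [Polynomial.degree_X_pow]
  exact hd

lemma rel_monic : (rel F).Monic := (monic_aux F _ _).1

lemma rel_natDegree : (rel F).natDegree = qq := (monic_aux F _ _).2

lemma psi_rel : psi F (rel F) = 0 := by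
  obtain ⟨m, hm⟩ : ∃ m, qq = m + 1 := ⟨qq - 1, by have := two_le_qq F; omega⟩
  have h := frob_add F (X (Sum.inl 0) * X (Sum.inr 0) : SS) (X (Sum.inl 1) * X (Sum.inr 1))
  simp only [psi, rel, u0, phi4, map_sub, map_add, map_mul, map_pow,
    Polynomial.coe_eval₂RingHom, Polynomial.eval₂_X, Polynomial.eval₂_C, RingHom.coe_coe, aeval_X]
  rw [h]
  simp only [hm, Nat.add_sub_cancel]
  simp
  ring

lemma theta_rel : theta F ((X 4 : MvPolynomial (Fin 5) F) ^ qq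
        - (X 0 * X 2) ^ (qq - 1) * X 4 - X 0 ^ qq * X 3 - X 2 ^ qq * X 1) = rel F := by
  simp [theta, rel]
  ring

lemma psi_mod (h : Polynomial QQ) : psi F (h %ₘ rel F) = psi F h := by
  conv_rhs => rw [← Polynomial.modByMonic_add_div h (rel F)]
  simp [psi_rel]

/-- `(x1,x2,y1,y2) ↦ (0,x2,y1,y2)` -/
noncomputable def eta : SS →ₐ[F] Polynomial TT :=
  aeval (S₁ := Polynomial TT) (Sum.elim ![0, Polynomial.X]
    ![Polynomial.C Polynomial.X, Polynomial.C (Polynomial.C Polynomial.X)])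

/-- kill X0 -/
noncomputable def chi : QQ →ₐ[F] Polynomial TT :=
  aeval (S₁ := Polynomial TT) ![0, Polynomial.X, Polynomial.C (Polynomial.C Polynomial.X), Polynomial.C Polynomial.X]

/-- partial inverse to chi -/
noncomputable def beta : Polynomial TT →+* QQ :=
  Polynomial.eval₂RingHom (Polynomial.eval₂RingHom
    (Polynomial.eval₂RingHom (MvPolynomial.C) (X 2)) (X 3)) (X 1)

lemma dvd_of_chi (c : QQ) (hc : chi F c = 0) : X 0 ∣ c := by
  have : (Ideal.Quotient.mk (Ideal.span {(X 0 : QQ)})).comp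
      ((beta F).comp (chi F : QQ →+* Polynomial TT)) =
      Ideal.Quotient.mk (Ideal.span {(X 0 : QQ)}) := by
    apply MvPolynomial.ringHom_ext
    · intro r
      simp [beta, chi, Polynomial.algebraMap_apply]
    · intro i
      fin_cases i <;> simp [beta, chi]
  have h := congrArg (fun f => f c) this
  simp [hc] at h
  rw [← Ideal.mem_span_singleton, ← Ideal.Quotient.eq_zero_iff_mem]
  exact h.symm

/-- the additive polynomial -/
noncomputable def fstar : TT :=
  Polynomial.X ^ qq - (Polynomial.C (Polynomial.X ^ (qq - 1)) * Polynomial.X + Polynomial.C 0)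

lemma comp_inj : Function.Injective (Polynomial.compRingHom (fstar F)) := by
  rw [injective_iff_map_eq_zero]
  intro a ha
  rw [Polynomial.coe_compRingHom_apply] at ha
  have h2 := two_le_qq F
  have hd : (fstar F).natDegree = qq := (monic_aux F _ _).2
  have h0 := congrArg Polynomial.natDegree ha
  rw [Polynomial.natDegree_comp, hd, Polynomial.natDegree_zero] at h0
  have h1 : a.natDegree = 0 := by
    rcases Nat.mul_eq_zero.1 h0 with h | h
    · exact h
    · omega
  rw [Polynomial.eq_C_of_natDegree_eq_zero h1] at ha ⊢
  simpa using ha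

lemma eta_phi4 (c : QQ) : eta F (phi4 F c) =
    Polynomial.expand TT qq ((chi F c).map (Polynomial.compRingHom (fstar F))) := by
  have h2 := two_le_qq F
  have : ((eta F).comp (phi4 F) : QQ →+* Polynomial TT) =
     ((Polynomial.expand TT qq : Polynomial TT →+* Polynomial TT).comp
      (Polynomial.mapRingHom (Polynomial.compRingHom (fstar F)))).comp
        (chi F : QQ →+* Polynomial TT) := by
    apply MvPolynomial.ringHom_ext
    · intro r
      simp [chi, Polynomial.algebraMap_apply]
    · intro i
      fin_cases i
      · simp [eta, phi4, chi]
      · have : qq - 1 ≠ 0 := by omega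
        simp [eta, phi4, chi, this]
      · simp [eta, phi4, chi]
      · simp [eta, phi4, chi, fstar, mul_comm]
  exact congrArg (fun f => f c) this

lemma expand_sum {R : Type*} [CommRing R] [IsDomain R] (n : ℕ) (t : R) (ht : t ≠ 0)
    (g : ℕ → Polynomial R)
    (h : ∑ i ∈ Finset.range n, Polynomial.expand R n (g i) * (Polynomial.X * Polynomial.C t) ^ i = 0)
    (i : ℕ) (hi : i < n) : g i = 0 := by
  have hn : 0 < n := by omega
  ext k
  have hk := congrArg (fun p => Polynomial.coeff p (k * n + i)) h
  simp only [Polynomial.finsetSum_coeff, Polynomial.coeff_zero] at hk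
  rw [Finset.sum_eq_single i] at hk
  · rw [mul_pow, ← mul_assoc, ← Polynomial.C_pow, Polynomial.coeff_mul_C, Polynomial.coeff_mul_X_pow,
      Polynomial.coeff_expand_mul hn] at hk
    simpa [ht] using hk
  · intro j hj hji
    rw [Finset.mem_range] at hj
    rw [mul_pow, ← mul_assoc, ← Polynomial.C_pow, Polynomial.coeff_mul_C, Polynomial.coeff_mul_X_pow']
    split_ifs with hle
    · rw [Polynomial.coeff_expand hn, if_neg, zero_mul]
      rintro ⟨c, hc⟩
      apply hji
      have e : k * n + i = c * n + j := by rw [mul_comm c n]; omega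
      have := congrArg (· % n) e
      simp [Nat.mod_eq_of_lt hi, Nat.mod_eq_of_lt hj] at this
      exact this.symm
    · simp
  · intro hi'
    exact absurd (Finset.mem_range.2 hi) hi'

lemma key (h : Polynomial QQ) (hd : h.natDegree < qq) (h0 : eta F (psi F h) = 0) :
    Polynomial.C (X 0) ∣ h := by
  rw [Polynomial.C_dvd_iff_dvd_coeff]
  intro i
  by_cases hi : i < qq
  · apply dvd_of_chi
    have e : psi F h = ∑ i ∈ Finset.range qq, phi4 F (h.coeff i) * u0 F ^ i := by
      simp [psi, Polynomial.eval₂_eq_sum_range' _ hd]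
    have eu : eta F (u0 F) = Polynomial.X * Polynomial.C (Polynomial.C Polynomial.X) := by
      simp [eta, u0]
    rw [e] at h0
    simp only [map_sum, map_mul, map_pow, eu, eta_phi4] at h0
    have := expand_sum qq _ (by simp) _ h0 i hi
    rwa [Polynomial.map_eq_zero_iff (comp_inj F)] at this
  · rw [Polynomial.coeff_eq_zero_of_natDegree_lt (by omega)]
    exact dvd_zero _

lemma psi_CX0 : psi F (Polynomial.C (X 0)) = X (Sum.inl 0) := by
  simp [psi, phi4]

lemma natDegree_quot (h h' : Polynomial QQ) (hd : h.natDegree < qq)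
    (e : h = Polynomial.C (X 0) * h') : h'.natDegree < qq := by
  rwa [e, Polynomial.natDegree_C_mul (X_ne_zero _)] at hd

lemma psi_inj (h : Polynomial QQ) (hd : h.natDegree < qq) (h0 : psi F h = 0) : h = 0 := by
  by_contra hne
  have hu : ¬ IsUnit (Polynomial.C (X 0) : Polynomial QQ) := by
    rw [Polynomial.isUnit_C]
    exact (MvPolynomial.X_prime (R := F) (i := (0 : Fin 4))).not_isUnit
  obtain ⟨n, hn⟩ := FiniteMultiplicity.of_not_isUnit hu hne
  apply hn
  have : ∀ m, ∃ h', h = Polynomial.C (X 0) ^ m * h' ∧ h'.natDegree < qq ∧ psi F h' = 0 := by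
    intro m
    induction m with
    | zero => exact ⟨h, by simp, hd, h0⟩
    | succ m ih =>
      obtain ⟨h', e, d, z⟩ := ih
      obtain ⟨k, hk⟩ := key F h' d (by rw [z, map_zero])
      refine ⟨k, by rw [e, hk]; ring, natDegree_quot F _ _ d hk, ?_⟩
      rw [hk, map_mul, psi_CX0] at z
      exact (mul_eq_zero.1 z).resolve_left (X_ne_zero _)
  obtain ⟨h', e, -⟩ := this (n + 1)
  exact ⟨h', e⟩

lemma natDegree_mod (h : Polynomial QQ) : (h %ₘ rel F).natDegree < qq := by
  have := Polynomial.natDegree_modByMonic_lt h (rel_monic F) (by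
    intro h1
    have := rel_natDegree F
    rw [h1, Polynomial.natDegree_one] at this
    have := two_le_qq F
    omega)
  rwa [rel_natDegree] at this

lemma ker_eq : RingHom.ker ((phi2 F) : MvPolynomial (Fin 5) F →+* SS) =
      Ideal.span {(X 4 : MvPolynomial (Fin 5) F) ^ qq
        - (X 0 * X 2) ^ (qq - 1) * X 4
        - X 0 ^ qq * X 3
        - X 2 ^ qq * X 1} := by
  apply le_antisymm
  · intro p hp
    have hp' : phi2 F p = 0 := hp
    rw [← psi_theta, ← psi_mod] at hp'
    have h0 := psi_inj F _ (natDegree_mod F _) hp'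
    rw [Polynomial.modByMonic_eq_zero_iff_dvd (rel_monic F)] at h0
    obtain ⟨c, hc⟩ := h0
    rw [Ideal.mem_span_singleton]
    refine ⟨thetaInv F c, ?_⟩
    have := congrArg (thetaInv F) hc
    rwa [map_mul, thetaInv_theta, ← theta_rel, thetaInv_theta] at this
  · rw [Ideal.span_le, Set.singleton_subset_iff]
    change phi2 F _ = 0
    rw [← psi_theta, theta_rel, psi_rel]

lemma descend (p : SS) (h : X (Sum.inl 0) * p ∈ (phi2 F).range) : p ∈ (phi2 F).range := by
  obtain ⟨g, hg⟩ := h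
  have hg' : phi2 F g = X (Sum.inl 0) * p := hg
  rw [← psi_theta, ← psi_mod] at hg'
  obtain ⟨k, hk⟩ := key F _ (natDegree_mod F _) (by rw [hg']; simp [eta])
  rw [hk, map_mul, psi_CX0] at hg'
  refine ⟨thetaInv F k, ?_⟩
  change phi2 F _ = _
  rw [phi2_thetaInv]
  exact mul_left_cancel₀ (X_ne_zero _) hg'

lemma descend_pow (k : ℕ) (p : SS) (h : X (Sum.inl 0) ^ k * p ∈ (phi2 F).range) :
    p ∈ (phi2 F).range := by
  induction k with
  | zero => simpa using h
  | succ k ih =>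
    apply ih
    apply descend
    rwa [← mul_assoc, ← pow_succ']

lemma exists_clear (p : SS) : ∃ (k : ℕ) (g : Polynomial (MvPolynomial (Fin 5) F)),
    g.eval₂ (phi2 F : MvPolynomial (Fin 5) F →+* SS) (X (Sum.inl 1)) = X (Sum.inl 0) ^ k * p := by
  induction p using MvPolynomial.induction_on with
  | C a => exact ⟨0, Polynomial.C (C a), by simp⟩
  | add p r hp hr =>
    obtain ⟨k, g, hg⟩ := hp
    obtain ⟨l, f, hf⟩ := hr
    refine ⟨k + l, Polynomial.C (X 0 ^ l) * g + Polynomial.C (X 0 ^ k) * f, ?_⟩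
    rw [Polynomial.eval₂_add, Polynomial.eval₂_mul, Polynomial.eval₂_mul, hg, hf,
      Polynomial.eval₂_C, Polynomial.eval₂_C]
    simp [phi2]
    ring
  | mul_X p i hp =>
    obtain ⟨k, g, hg⟩ := hp
    rcases i with i | i <;> fin_cases i
    · refine ⟨k, g * Polynomial.C (X 0), ?_⟩
      rw [Polynomial.eval₂_mul, hg]
      simp [phi2, mul_assoc]
    · refine ⟨k, g * Polynomial.X, ?_⟩
      rw [Polynomial.eval₂_mul, hg]
      simp [mul_assoc]
    · refine ⟨k + 1, g * (Polynomial.C (X 4) - Polynomial.X * Polynomial.C (X 2)), ?_⟩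
      rw [Polynomial.eval₂_mul, hg]
      simp [phi2]
      ring
    · refine ⟨k, g * Polynomial.C (X 2), ?_⟩
      rw [Polynomial.eval₂_mul, hg]
      simp [phi2, mul_assoc]

lemma exists_clear_lt (p : SS) : ∃ (k : ℕ) (g : Polynomial (MvPolynomial (Fin 5) F)),
    g.natDegree < qq ∧
    g.eval₂ (phi2 F : MvPolynomial (Fin 5) F →+* SS) (X (Sum.inl 1)) = X (Sum.inl 0) ^ k * p := by
  obtain ⟨k, g, hg⟩ := exists_clear F p
  obtain ⟨hm, hd⟩ := monic_aux F (X 0 ^ (qq - 1) : MvPolynomial (Fin 5) F) (X 1)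
  set r := (Polynomial.X ^ qq - (Polynomial.C (X 0 ^ (qq - 1) : MvPolynomial (Fin 5) F) *
    Polynomial.X + Polynomial.C (X 1))) with hr
  have h2 := two_le_qq F
  refine ⟨k, g %ₘ r, ?_, ?_⟩
  · have := Polynomial.natDegree_modByMonic_lt g hm (by
      intro h1
      rw [h1, Polynomial.natDegree_one] at hd
      omega)
    rwa [hd] at this
  · rw [← hg]
    conv_rhs => rw [← Polynomial.modByMonic_add_div g r]
    have : r.eval₂ (phi2 F : MvPolynomial (Fin 5) F →+* SS) (X (Sum.inl 1)) = 0 := by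
      rw [hr, Polynomial.eval₂_sub, Polynomial.eval₂_add, Polynomial.eval₂_mul, Polynomial.eval₂_C,
        Polynomial.eval₂_C]
      simp [phi2]
      ring
    rw [Polynomial.eval₂_add, Polynomial.eval₂_mul, this, zero_mul, add_zero]

/-- the unipotent matrix -/
noncomputable def umat (a : F) : GL (Fin 2) F :=
  ⟨!![1, a; 0, 1], !![1, -a; 0, 1], by ext i j; fin_cases i <;> fin_cases j <;> simp,
    by ext i j; fin_cases i <;> fin_cases j <;> simp⟩

lemma eq_umat (σ : GL (Fin 2) F)
    (h : (∀ i : Fin 2, (σ : Matrix (Fin 2) (Fin 2) F) i i = 1) ∧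
          ∀ i j : Fin 2, j < i → (σ : Matrix (Fin 2) (Fin 2) F) i j = 0) :
    σ = umat F ((σ : Matrix (Fin 2) (Fin 2) F) 0 1) := by
  apply Units.ext
  ext i j
  fin_cases i <;> fin_cases j
  · simpa [umat] using h.1 0
  · simp [umat]
  · simpa [umat] using h.2 1 0 (by decide)
  · simpa [umat] using h.1 1

lemma gact_x0 (a : F) : gact2 F (umat F a) (X (Sum.inl 0)) = X (Sum.inl 0) := by
  simp [gact2, umat]

lemma gact_x1 (a : F) : gact2 F (umat F a) (X (Sum.inl 1)) =
    X (Sum.inl 1) + C a * X (Sum.inl 0) := by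
  simp [gact2, umat, add_comm]

lemma gact_y0 (a : F) : gact2 F (umat F a) (X (Sum.inr 0)) =
    X (Sum.inr 0) - C a * X (Sum.inr 1) := by
  simp [gact2, umat, sub_eq_add_neg]

lemma gact_y1 (a : F) : gact2 F (umat F a) (X (Sum.inr 1)) = X (Sum.inr 1) := by
  simp [gact2, umat]

lemma gact_phi2 (a : F) (p : MvPolynomial (Fin 5) F) :
    gact2 F (umat F a) (phi2 F p) = phi2 F p := by
  have : (gact2 F (umat F a)).comp (phi2 F) = phi2 F := by
    obtain ⟨m, hm⟩ : ∃ m, qq = m + 1 := ⟨qq - 1, by have := two_le_qq F; omega⟩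
    have hC : (C a : SS) ^ (m + 1) = C a := by
      rw [← C_pow, ← hm, FiniteField.pow_card]
    apply MvPolynomial.algHom_ext
    intro i
    fin_cases i
    · simp [phi2, gact_x0]
    · have := frob_add F (X (Sum.inl 1) : SS) (C a * X (Sum.inl 0))
      simp [phi2, gact_x0, gact_x1, this]
      simp only [hm, Nat.add_sub_cancel, mul_pow, hC]
      ring
    · simp [phi2, gact_y1]
    · have := frob_sub F (X (Sum.inr 0) : SS) (C a * X (Sum.inr 1))
      simp [phi2, gact_y0, gact_y1, this]
      simp only [hm, Nat.add_sub_cancel, mul_pow, hC]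
      ring
    · simp [phi2, gact_x0, gact_x1, gact_y0, gact_y1]
      ring
  exact congrArg (fun f => f p) this

lemma inv_mem (p : SS) (hp : ∀ a, gact2 F (umat F a) p = p) : p ∈ (phi2 F).range := by
  obtain ⟨k, g, hd, hg⟩ := exists_clear_lt F p
  apply descend_pow F k
  set G : Polynomial SS := g.map (phi2 F : MvPolynomial (Fin 5) F →+* SS) -
    Polynomial.C (X (Sum.inl 0) ^ k * p) with hG
  have h2 := two_le_qq F
  have hG0 : G = 0 := by
    apply Polynomial.eq_zero_of_natDegree_lt_card_of_eval_eq_zero G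
      (f := fun a : F => (X (Sum.inl 1) + C a * X (Sum.inl 0) : SS))
    · intro a b hab
      have := mul_right_cancel₀ (X_ne_zero _) (add_left_cancel hab)
      exact C_injective _ _ this
    · intro a
      have h1 := congrArg (gact2 F (umat F a)) hg
      rw [map_mul, map_pow, gact_x0, hp, ← AlgHom.coe_toRingHom, Polynomial.hom_eval₂] at h1
      have h3 : (gact2 F (umat F a)).toRingHom.comp
          (phi2 F : MvPolynomial (Fin 5) F →+* SS) = (phi2 F : MvPolynomial (Fin 5) F →+* SS) := by
        exact RingHom.ext fun x => gact_phi2 F a x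
      have h4 : (gact2 F (umat F a)).toRingHom (X (Sum.inl 1)) =
        X (Sum.inl 1) + C a * X (Sum.inl 0) := gact_x1 F a
      rw [hG, Polynomial.eval_sub, Polynomial.eval_map, Polynomial.eval_C, sub_eq_zero]
      rw [← h1, ← h4]
      congr 1
      exact h3.symm
    · refine lt_of_eq_of_lt Polynomial.natDegree_sub_C ?_
      exact lt_of_le_of_lt Polynomial.natDegree_map_le hd
  have h5 := congrArg (fun P => Polynomial.coeff P 0) hG0
  simp only [hG, Polynomial.coeff_sub, Polynomial.coeff_map, Polynomial.coeff_C_zero,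
    Polynomial.coeff_zero, sub_eq_zero] at h5
  exact ⟨g.coeff 0, h5⟩

end Helpers

/-- The case `n = 2` of the main theorem for `U_2`: (a) the invariant ring
`F_q[x_1,x_2,y_1,y_2]^{U_2}` is the image of `φ` (i.e. it is generated by
`f_1, f_2, f_1^*, f_2^*, u_0`), and (b) the kernel of `φ` is generated by the single
relation `Z^q - (X_1 Y_1)^{q-1} Z - X_1^q Y_2 - Y_1^q X_2`. -/
theorem invariantRing_U2 :
    (∀ p : MvPolynomial (Fin 2 ⊕ Fin 2) F,
      (∀ σ : GL (Fin 2) F,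
        ((∀ i : Fin 2, (σ : Matrix (Fin 2) (Fin 2) F) i i = 1) ∧
          ∀ i j : Fin 2, j < i → (σ : Matrix (Fin 2) (Fin 2) F) i j = 0) →
        gact2 F σ p = p) ↔ p ∈ (phi2 F).range) ∧
    RingHom.ker ((phi2 F) : MvPolynomial (Fin 5) F →+* MvPolynomial (Fin 2 ⊕ Fin 2) F) =
      Ideal.span {(X 4 : MvPolynomial (Fin 5) F) ^ (Fintype.card F)
        - (X 0 * X 2) ^ (Fintype.card F - 1) * X 4
        - X 0 ^ (Fintype.card F) * X 3
        - X 2 ^ (Fintype.card F) * X 1} := by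
  refine ⟨fun p => ⟨fun h => inv_mem F p fun a => h _ ?_, ?_⟩, ker_eq F⟩
  · constructor
    · intro i
      fin_cases i <;> simp [umat]
    · intro i j hij
      fin_cases i <;> fin_cases j <;> simp [umat] at hij ⊢
  · rintro ⟨g, rfl⟩ σ hσ
    rw [eq_umat F σ hσ]
    exact gact_phi2 F _ g
end

section
/- Let q = 3 and n = 2, and let G = SL_2(F_3) ⊆ GL_2(F_3) act on F_3[x_1,x_2,y_1,y_2] as described. Set f_1 := x_1^3 x_2 − x_1 x_2^3 and f_2 := x_1^6 + x_1^4 x_2^2 + x_1^2 x_2^4 + x_2^6, so that F_3[x_1,x_2]^G = F_3[f_1,f_2]. Then the F_3-subalgebra of F_3[x_1,x_2,y_1,y_2] generated by f_1, f_2, f_1*, f_2*, and u_i for all i ∈ ℤ is a proper subalgebra of the invariant ring F_3[x_1,x_2,y_1,y_2]^G; that is, F_3[V ⊕ V*]^{SL_2(F_3)} is not generated by generators of F_3[V]^{SL_2(F_3)}, their *-images, and the invariants u_i. -/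
open MvPolynomial Matrix

/-- The action of `σ ∈ GL_2(F_3)` on `F_3[V ⊕ V*] = F_3[x_1,x_2,y_1,y_2]`:
`σ` acts naturally on the span of the `x_j` (so `σ·x_j = ∑_i σ_{ij} x_i`)
and by `σ·λ = λ ∘ σ⁻¹` on the span of the `y_j` (so `σ·y_j = ∑_i (σ⁻¹)_{ji} y_i`). -/
noncomputable def gactSL (σ : GL (Fin 2) (ZMod 3)) :
    MvPolynomial (Fin 2 ⊕ Fin 2) (ZMod 3) →ₐ[ZMod 3] MvPolynomial (Fin 2 ⊕ Fin 2) (ZMod 3) :=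
  aeval (Sum.elim
    (fun j => ∑ i : Fin 2, C ((σ : Matrix (Fin 2) (Fin 2) (ZMod 3)) i j) * X (Sum.inl i))
    (fun j => ∑ i : Fin 2,
      C (((σ⁻¹ : GL (Fin 2) (ZMod 3)) : Matrix (Fin 2) (Fin 2) (ZMod 3)) j i) * X (Sum.inr i)))

/-- The invariant `u_j` for `j : ℤ` (here `q = 3`, `n = 2`). -/
noncomputable def uSL (j : ℤ) : MvPolynomial (Fin 2 ⊕ Fin 2) (ZMod 3) :=
  if 0 ≤ j then
    X (Sum.inl 0) ^ 3 ^ j.toNat * X (Sum.inr 0) + X (Sum.inl 1) ^ 3 ^ j.toNat * X (Sum.inr 1)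
  else
    X (Sum.inl 0) * X (Sum.inr 0) ^ 3 ^ (-j).toNat + X (Sum.inl 1) * X (Sum.inr 1) ^ 3 ^ (-j).toNat

/-- The generators `f_1 = x_1^3 x_2 - x_1 x_2^3`, `f_2 = x_1^6 + x_1^4 x_2^2 + x_1^2 x_2^4 + x_2^6`
of `F_3[V]^{SL_2(F_3)}`, their images `f_1^*, f_2^*` under the involution `*`
(`x_1 ↦ y_2, x_2 ↦ y_1, y_1 ↦ x_2, y_2 ↦ x_1`), and all the `u_i`, `i ∈ ℤ`. -/
noncomputable def genSetSL : Set (MvPolynomial (Fin 2 ⊕ Fin 2) (ZMod 3)) :=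
  {X (Sum.inl 0) ^ 3 * X (Sum.inl 1) - X (Sum.inl 0) * X (Sum.inl 1) ^ 3,
    X (Sum.inl 0) ^ 6 + X (Sum.inl 0) ^ 4 * X (Sum.inl 1) ^ 2
      + X (Sum.inl 0) ^ 2 * X (Sum.inl 1) ^ 4 + X (Sum.inl 1) ^ 6,
    X (Sum.inr 1) ^ 3 * X (Sum.inr 0) - X (Sum.inr 1) * X (Sum.inr 0) ^ 3,
    X (Sum.inr 1) ^ 6 + X (Sum.inr 1) ^ 4 * X (Sum.inr 0) ^ 2
      + X (Sum.inr 1) ^ 2 * X (Sum.inr 0) ^ 4 + X (Sum.inr 0) ^ 6} ∪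
  Set.range uSL

/-- an invariant outside of the subalgebra -/
noncomputable def pSL : MvPolynomial (Fin 2 ⊕ Fin 2) (ZMod 3) :=
  - (X (Sum.inl 0) ^ 3 * X (Sum.inr 1) ^ 3) + X (Sum.inl 1) ^ 3 * X (Sum.inr 0) ^ 3
  + X (Sum.inl 0) * X (Sum.inl 1) ^ 2 * X (Sum.inr 1) ^ 3
  + X (Sum.inl 0) ^ 3 * X (Sum.inr 1) * X (Sum.inr 0) ^ 2
  - X (Sum.inl 1) * X (Sum.inl 0) ^ 2 * X (Sum.inr 0) ^ 3
  - X (Sum.inl 1) ^ 3 * X (Sum.inr 0) * X (Sum.inr 1) ^ 2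

/-- the evaluation at `x_1 = t`, `y_2 = 1`, `x_2 = y_1 = 0` -/
noncomputable def evSL (t : ZMod 3) : MvPolynomial (Fin 2 ⊕ Fin 2) (ZMod 3) →ₐ[ZMod 3] ZMod 3 :=
  aeval (Sum.elim ![t, 0] ![0, 1])

theorem evSL_eq (p : MvPolynomial (Fin 2 ⊕ Fin 2) (ZMod 3))
    (hp : p ∈ Algebra.adjoin (ZMod 3) genSetSL) : evSL 1 p = evSL (-1) p := by
  have h : Algebra.adjoin (ZMod 3) genSetSL ≤ AlgHom.equalizer (evSL 1) (evSL (-1)) := by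
    rw [Algebra.adjoin_le_iff]
    rintro q ((rfl | rfl | rfl | rfl) | ⟨j, rfl⟩)
    · simp [evSL]
    · simp [evSL]; decide
    · simp [evSL]
    · simp [evSL]
    · simp only [SetLike.mem_coe, AlgHom.mem_equalizer, uSL]
      split_ifs <;> simp [evSL]
  exact h hp

theorem gactSL_X (σ : GL (Fin 2) (ZMod 3))
    (hσ : Matrix.det (σ : Matrix (Fin 2) (Fin 2) (ZMod 3)) = 1) :
    ∃ a b c d : ZMod 3, a * d - b * c = 1 ∧
      gactSL σ (X (Sum.inl 0)) = C a * X (Sum.inl 0) + C c * X (Sum.inl 1) ∧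
      gactSL σ (X (Sum.inl 1)) = C b * X (Sum.inl 0) + C d * X (Sum.inl 1) ∧
      gactSL σ (X (Sum.inr 0)) = C d * X (Sum.inr 0) - C b * X (Sum.inr 1) ∧
      gactSL σ (X (Sum.inr 1)) = - C c * X (Sum.inr 0) + C a * X (Sum.inr 1) := by
  refine ⟨σ.1 0 0, σ.1 0 1, σ.1 1 0, σ.1 1 1, ?_, ?_⟩
  · rw [← Matrix.det_fin_two]; exact hσ
  · have hinv : ((σ⁻¹ : GL (Fin 2) (ZMod 3)) : Matrix (Fin 2) (Fin 2) (ZMod 3))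
        = !![σ.1 1 1, - σ.1 0 1; - σ.1 1 0, σ.1 0 0] := by
      rw [Matrix.coe_units_inv, Matrix.inv_def, hσ, Matrix.adjugate_fin_two]
      simp
    simp [gactSL, hinv, Fin.sum_univ_two, sub_eq_add_neg]

theorem three_SL : (3 : MvPolynomial (Fin 2 ⊕ Fin 2) (ZMod 3)) = 0 := by
  have h : ((3 : ℕ) : MvPolynomial (Fin 2 ⊕ Fin 2) (ZMod 3)) = 0 := CharP.cast_eq_zero _ 3
  exact_mod_cast h

theorem C_cube_SL (a : ZMod 3) :
    (C a : MvPolynomial (Fin 2 ⊕ Fin 2) (ZMod 3)) ^ 3 = C a := by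
  rw [← C_pow, ZMod.pow_card]

theorem lin_pow_SL (a b : ZMod 3) (x y : MvPolynomial (Fin 2 ⊕ Fin 2) (ZMod 3)) (n : ℕ) :
    (C a * x + C b * y) ^ 3 ^ n = C a * x ^ 3 ^ n + C b * y ^ 3 ^ n := by
  rw [add_pow_char_pow, mul_pow, mul_pow, ← C_pow, ← C_pow, ZMod.pow_card_pow, ZMod.pow_card_pow]

theorem mem_cases_SL (a : ZMod 3) : a = 0 ∨ a = 1 ∨ a = -1 := by
  revert a; decide

set_option maxHeartbeats 8000000 in
/-- The invariance identities for the polynomials of degree 4 and 6, in characteristic 3. -/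
theorem identities_SL {R : Type*} [CommRing R] (h3 : (3 : R) = 0) (a b c d : R)
    (ha : a = 0 ∨ a = 1 ∨ a = -1) (hb : b = 0 ∨ b = 1 ∨ b = -1)
    (hc : c = 0 ∨ c = 1 ∨ c = -1) (hd : d = 0 ∨ d = 1 ∨ d = -1)
    (h : a * d - b * c = 1) (x y z w : R) :
    ((a * x + c * y) ^ 3 * (b * x + d * y) - (a * x + c * y) * (b * x + d * y) ^ 3
      = x ^ 3 * y - x * y ^ 3) ∧
    ((a * x + c * y) ^ 6 + (a * x + c * y) ^ 4 * (b * x + d * y) ^ 2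
      + (a * x + c * y) ^ 2 * (b * x + d * y) ^ 4 + (b * x + d * y) ^ 6
      = x ^ 6 + x ^ 4 * y ^ 2 + x ^ 2 * y ^ 4 + y ^ 6) ∧
    (- ((a * x + c * y) ^ 3 * (-c * z + a * w) ^ 3) + (b * x + d * y) ^ 3 * (d * z - b * w) ^ 3
      + (a * x + c * y) * (b * x + d * y) ^ 2 * (-c * z + a * w) ^ 3
      + (a * x + c * y) ^ 3 * (-c * z + a * w) * (d * z - b * w) ^ 2
      - (b * x + d * y) * (a * x + c * y) ^ 2 * (d * z - b * w) ^ 3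
      - (b * x + d * y) ^ 3 * (d * z - b * w) * (-c * z + a * w) ^ 2
      = - (x ^ 3 * w ^ 3) + y ^ 3 * z ^ 3 + x * y ^ 2 * w ^ 3 + x ^ 3 * w * z ^ 2
        - y * x ^ 2 * z ^ 3 - y ^ 3 * z * w ^ 2) := by
  rcases ha with rfl | rfl | rfl <;> rcases hb with rfl | rfl | rfl <;>
    rcases hc with rfl | rfl | rfl <;> rcases hd with rfl | rfl | rfl <;>
    refine ⟨?_, ?_, ?_⟩ <;> grind

theorem gactSL_fix (σ : GL (Fin 2) (ZMod 3))
    (hσ : Matrix.det (σ : Matrix (Fin 2) (Fin 2) (ZMod 3)) = 1) :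
    (∀ q ∈ genSetSL, gactSL σ q = q) ∧ gactSL σ pSL = pSL := by
  obtain ⟨a, b, c, d, h, h1, h2, h3, h4⟩ := gactSL_X σ hσ
  have hC : ∀ t : ZMod 3, (C t : MvPolynomial (Fin 2 ⊕ Fin 2) (ZMod 3)) = 0 ∨
      (C t : MvPolynomial (Fin 2 ⊕ Fin 2) (ZMod 3)) = 1 ∨
      (C t : MvPolynomial (Fin 2 ⊕ Fin 2) (ZMod 3)) = -1 := by
    intro t
    rcases mem_cases_SL t with rfl | rfl | rfl <;> simp
  have hdet : (C a * C d - C b * C c : MvPolynomial (Fin 2 ⊕ Fin 2) (ZMod 3)) = 1 := by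
    rw [← C_mul, ← C_mul, ← C_sub, h, C_1]
  have hneg : ∀ t : ZMod 3, (-C t : MvPolynomial (Fin 2 ⊕ Fin 2) (ZMod 3)) = C (-t) := by
    intro t; simp
  have key := identities_SL three_SL (C a) (C b) (C c) (C d) (hC a) (hC b) (hC c) (hC d) hdet
    (X (Sum.inl 0)) (X (Sum.inl 1)) (X (Sum.inr 0)) (X (Sum.inr 1))
  have key2 := identities_SL three_SL (C a) (C (-b)) (C (-c)) (C d) (hC a) (hC _) (hC _) (hC d)
    (by simpa using hdet)
    (X (Sum.inr 1)) (X (Sum.inr 0)) (X (Sum.inl 0)) (X (Sum.inl 1))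
  refine ⟨?_, ?_⟩
  · rintro q ((rfl | rfl | rfl | rfl) | ⟨j, rfl⟩)
    · simp only [map_sub, map_mul, map_pow, h1, h2]
      exact key.1
    · simp only [map_add, map_mul, map_pow, h1, h2]
      exact key.2.1
    · simp only [map_sub, map_mul, map_pow, h3, h4]
      rw [← key2.1]
      simp only [map_neg]
      ring
    · simp only [map_add, map_mul, map_pow, h3, h4]
      rw [← key2.2.1]
      simp only [map_neg]
      ring
    · unfold uSL
      split_ifs
      · simp only [map_add, map_mul, map_pow, h1, h2, h3, h4, lin_pow_SL]
        linear_combination (X (Sum.inl 0) ^ 3 ^ j.toNat * X (Sum.inr 0)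
          + X (Sum.inl 1) ^ 3 ^ j.toNat * X (Sum.inr 1)) * hdet
      · simp only [map_add, map_mul, map_pow, h1, h2, h3, h4, sub_eq_add_neg, ← neg_mul, hneg,
          lin_pow_SL]
        simp only [map_neg]
        linear_combination (X (Sum.inl 0) * X (Sum.inr 0) ^ 3 ^ (-j).toNat
          + X (Sum.inl 1) * X (Sum.inr 1) ^ 3 ^ (-j).toNat) * hdet
  · simp only [pSL, map_add, map_sub, map_neg, map_mul, map_pow, h1, h2, h3, h4]
    exact key.2.2

/-- For `G = SL_2(F_3)`, the subalgebra of `F_3[V ⊕ V*]` generated by `f_1, f_2, f_1^*, f_2^*`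
and the `u_i` (`i ∈ ℤ`) is a **proper** subalgebra of the invariant ring
`F_3[V ⊕ V*]^{SL_2(F_3)}`. -/
theorem SL2_F3_not_generated :
    (∀ p ∈ Algebra.adjoin (ZMod 3) genSetSL,
      ∀ σ : GL (Fin 2) (ZMod 3),
        Matrix.det (σ : Matrix (Fin 2) (Fin 2) (ZMod 3)) = 1 → gactSL σ p = p) ∧
    ∃ p : MvPolynomial (Fin 2 ⊕ Fin 2) (ZMod 3),
      (∀ σ : GL (Fin 2) (ZMod 3),
        Matrix.det (σ : Matrix (Fin 2) (Fin 2) (ZMod 3)) = 1 → gactSL σ p = p) ∧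
      p ∉ Algebra.adjoin (ZMod 3) genSetSL := by
  refine ⟨?_, pSL, fun σ hσ => (gactSL_fix σ hσ).2, fun hp => ?_⟩
  · intro p hp σ hσ
    have h : Algebra.adjoin (ZMod 3) genSetSL ≤
        AlgHom.equalizer (gactSL σ) (AlgHom.id (ZMod 3) _) := by
      rw [Algebra.adjoin_le_iff]
      exact fun q hq => (gactSL_fix σ hσ).1 q hq
    exact h hp
  · have h := evSL_eq pSL hp
    simp [pSL, evSL] at h
    revert h
    decide
end
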